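/- arXiv:1105.4824 — 4 statements merged into one kernel-verified Lean document; each statement's English description precedes it below -/
import Mathlib

section
/- For every nonnegative integer n, r_4(n) = 8·σ_1(m) if n = m is odd, and r_4(n) = 24·σ_1(m) if n = 2^α·m with m odd and α ≥ 1, where r_4(n) is the number of (x1,x2,x3,x4) ∈ ℤ^4 with x1²+x2²+x3²+x4² = n. -/
/-!
Write `p(M)` for the number of representations of `M` as an ordered sum of four *odd* squares.
The proof has two parts.

*Four odd squares.* For `M ≡ 4 (mod 8)` one has `p(M) = 16 ∑ d`, the sum being over the pairs
`d, e > 0` with `4de = M`. Both sides satisfy one and the same recurrence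
`∑_{z odd} (N - 5z²) f(N - z²) = 0` for `N ≡ 5 (mod 8)`, which determines `f` from `f(4)`.
For `p` this is the symmetry of the five coordinates in `∑ (N - 5x₀²)` over representations of `N`
by five odd squares (`sum_oddReps_five`). For the divisor sum it says that
`∑ d(de - z²) = 0` over the solutions of `z² + 4de = N` with `d, e > 0` (`sum_zagierSet`). This is
a Liouville-type identity: up to the symmetries `z ↦ -z` and `d ↔ e`, twice the summand is
`G = (z + d)(2e - z - d)(2e - z)`. The involution `(z, d, e) ↦ (-z - 2d, d, e - z - d)` changes the
sign of `G` and acts on the solutions with `e > z + d`; the other solutions are reparametrised by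
`(t, a, b) = (z - 2e, e, z + d - e)`, which solves the same equation and turns `G` into
`t(b² - a²)`, whose sum vanishes by the symmetries again.

*Reduction to odd squares.* The map `(x₀ + x₁, x₀ - x₁, x₂ + x₃, x₂ - x₃)` identifies the
representations of `n` with those representations `y` of `2n` for which `y₀ ≡ y₁` and `y₂ ≡ y₃`
modulo 2. If `n` is even these are all of them, so `r(2n) = r(n)`; if `n` is odd they are one third,
so `r(2n) = 3 r(n)`. A representation of `4m` has all coordinates odd or all even, so
`r(4m) = p(4m) + r(m)`. For odd `m` this gives `3 r(m) = p(4m) + r(m)`, that is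
`r(m) = p(4m) / 2 = 8 σ(m)`.
-/

/-- `r s n` is the number of representations of `n` as an ordered sum of `s` integer squares. -/
noncomputable def sumOfSquaresRep (s n : ℕ) : ℕ :=
  Set.ncard {x : Fin s → ℤ | ∑ i, x i ^ 2 = (n : ℤ)}

open Finset

lemma sq_emod_eight {z : ℤ} (hz : z % 2 = 1) : z ^ 2 % 8 = 1 := by
  have h : z % 8 = 1 ∨ z % 8 = 3 ∨ z % 8 = 5 ∨ z % 8 = 7 := by omega
  rcases h with h | h | h | h <;> simp [pow_two, Int.mul_emod, h]

/-! ### Solutions of `z² + 4de = N` -/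

/-- The triples `(z, d, e)` with `z² + 4de = N` and `d, e > 0`; the box only serves to make the
set a `Finset`, see `mem_zagierSet`. -/
noncomputable def zagierSet (N : ℤ) : Finset (ℤ × ℤ × ℤ) :=
  (Icc (-N) N ×ˢ Icc 1 N ×ˢ Icc 1 N).filter (fun x => x.1 ^ 2 + 4 * x.2.1 * x.2.2 = N)

lemma mem_zagierSet {N z d e : ℤ} :
    (z, d, e) ∈ zagierSet N ↔ 0 < d ∧ 0 < e ∧ z ^ 2 + 4 * d * e = N := by
  simp only [zagierSet, mem_filter, mem_product, mem_Icc]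
  constructor
  · rintro ⟨⟨_, ⟨h1, _⟩, h2, _⟩, h⟩
    exact ⟨by omega, by omega, h⟩
  · rintro ⟨hd, he, h⟩
    have hde : 0 < d * e := mul_pos hd he
    have h1 : d ≤ d * e := by nlinarith
    have h2 : e ≤ d * e := by nlinarith
    have hz : |z| ≤ z ^ 2 := by
      rw [← sq_abs]
      rcases eq_or_ne z 0 with rfl | h0
      · simp
      · have := Int.one_le_abs h0
        nlinarith
    have h3 := neg_abs_le z
    have h4 := le_abs_self z
    have h5 := sq_nonneg z
    refine ⟨⟨⟨?_, ?_⟩, ⟨?_, ?_⟩, ⟨?_, ?_⟩⟩, h⟩ <;> linarith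

lemma sum_zagierSet_neg (N : ℤ) (K : ℤ → ℤ → ℤ → ℤ) :
    ∑ x ∈ zagierSet N, K (-x.1) x.2.1 x.2.2 = ∑ x ∈ zagierSet N, K x.1 x.2.1 x.2.2 := by
  refine sum_bij' (fun x _ => (-x.1, x.2.1, x.2.2)) (fun x _ => (-x.1, x.2.1, x.2.2)) ?_ ?_ ?_ ?_ ?_
  · rintro ⟨z, d, e⟩ h
    rw [mem_zagierSet] at *
    simpa using h
  · rintro ⟨z, d, e⟩ h
    rw [mem_zagierSet] at *
    simpa using h
  · rintro ⟨z, d, e⟩ h; simp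
  · rintro ⟨z, d, e⟩ h; simp
  · rintro ⟨z, d, e⟩ h; simp

lemma sum_zagierSet_swap (N : ℤ) (K : ℤ → ℤ → ℤ → ℤ) :
    ∑ x ∈ zagierSet N, K x.1 x.2.2 x.2.1 = ∑ x ∈ zagierSet N, K x.1 x.2.1 x.2.2 := by
  refine sum_bij' (fun x _ => (x.1, x.2.2, x.2.1)) (fun x _ => (x.1, x.2.2, x.2.1)) ?_ ?_ ?_ ?_ ?_
  · rintro ⟨z, d, e⟩ h
    rw [mem_zagierSet] at *
    exact ⟨h.2.1, h.1, by linarith [h.2.2]⟩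
  · rintro ⟨z, d, e⟩ h
    rw [mem_zagierSet] at *
    exact ⟨h.2.1, h.1, by linarith [h.2.2]⟩
  · rintro ⟨z, d, e⟩ h; simp
  · rintro ⟨z, d, e⟩ h; simp
  · rintro ⟨z, d, e⟩ h; simp

lemma odd_of_mem_zagierSet {N z d e : ℤ} (hN : N % 8 = 5) (h : (z, d, e) ∈ zagierSet N) :
    z % 2 = 1 ∧ d % 2 = 1 ∧ e % 2 = 1 := by
  rw [mem_zagierSet] at h
  obtain ⟨_, _, h⟩ := h
  have hz : z % 2 = 1 := by
    rcases Int.emod_two_eq_zero_or_one z with h0 | h0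
    · obtain ⟨k, rfl⟩ := Int.dvd_of_emod_eq_zero h0
      ring_nf at h
      omega
    · exact h0
  have hz' : z ^ 2 % 8 = 1 := sq_emod_eight hz
  have hde : (d * e) % 2 = 1 := by
    have : 4 * d * e = 4 * (d * e) := by ring
    omega
  have := Int.odd_mul.1 (Int.odd_iff.2 hde)
  exact ⟨hz, Int.odd_iff.1 this.1, Int.odd_iff.1 this.2⟩

/-- The antisymmetry of `G = (z + d)(2e - z - d)(2e - z)` under
`(z, d, e) ↦ (-z - 2d, d, e - z - d)`. -/
lemma sum_zagierSet_involution (N : ℤ) :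
    ∑ x ∈ zagierSet N with x.1 + x.2.1 < x.2.2,
      (x.1 + x.2.1) * (2 * x.2.2 - x.1 - x.2.1) * (2 * x.2.2 - x.1) = 0 := by
  have key : ∑ x ∈ zagierSet N with x.1 + x.2.1 < x.2.2,
        (x.1 + x.2.1) * (2 * x.2.2 - x.1 - x.2.1) * (2 * x.2.2 - x.1)
      = ∑ x ∈ zagierSet N with x.1 + x.2.1 < x.2.2,
        -((x.1 + x.2.1) * (2 * x.2.2 - x.1 - x.2.1) * (2 * x.2.2 - x.1)) := by
    refine sum_bij' (fun x _ => (-x.1 - 2 * x.2.1, x.2.1, x.2.2 - x.1 - x.2.1))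
      (fun x _ => (-x.1 - 2 * x.2.1, x.2.1, x.2.2 - x.1 - x.2.1)) ?_ ?_ ?_ ?_ ?_
    · rintro ⟨z, d, e⟩ h
      simp only [mem_filter, mem_zagierSet] at *
      obtain ⟨⟨h1, h2, h3⟩, h4⟩ := h
      exact ⟨⟨h1, by linarith, by linarith⟩, by linarith⟩
    · rintro ⟨z, d, e⟩ h
      simp only [mem_filter, mem_zagierSet] at *
      obtain ⟨⟨h1, h2, h3⟩, h4⟩ := h
      exact ⟨⟨h1, by linarith, by linarith⟩, by linarith⟩
    · rintro ⟨z, d, e⟩ h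
      ext <;> simp; ring
    · rintro ⟨z, d, e⟩ h
      ext <;> simp; ring
    · rintro ⟨z, d, e⟩ h
      ring
  rw [sum_neg_distrib] at key
  linarith

/-- The change of variables `(t, a, b) = (z - 2e, e, z + d - e)`. -/
lemma sum_zagierSet_complement {N : ℤ} (hN : N % 8 = 5) :
    ∑ x ∈ zagierSet N with ¬ x.1 + x.2.1 < x.2.2,
      (x.1 + x.2.1) * (2 * x.2.2 - x.1 - x.2.1) * (2 * x.2.2 - x.1)
    = ∑ x ∈ zagierSet N with 0 < x.2.2 - x.2.1 - x.1, x.1 * (x.2.2 ^ 2 - x.2.1 ^ 2) := by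
  refine sum_bij' (fun x _ => (x.1 - 2 * x.2.2, x.2.2, x.1 + x.2.1 - x.2.2))
    (fun x _ => (x.1 + 2 * x.2.1, x.2.2 - x.2.1 - x.1, x.2.1)) ?_ ?_ ?_ ?_ ?_
  · rintro ⟨z, d, e⟩ h
    rw [mem_filter] at h
    have hodd := odd_of_mem_zagierSet hN h.1
    simp only [mem_filter, mem_zagierSet] at *
    obtain ⟨⟨h1, h2, h3⟩, h4⟩ := h
    -- `e = z + d` is excluded by parity
    exact ⟨⟨h2, by omega, by linarith⟩, by linarith⟩
  · rintro ⟨z, d, e⟩ h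
    simp only [mem_filter, mem_zagierSet] at *
    obtain ⟨⟨h1, h2, h3⟩, h4⟩ := h
    exact ⟨⟨h4, h1, by linarith⟩, by linarith⟩
  · rintro ⟨z, d, e⟩ h
    ext <;> simp; ring
  · rintro ⟨z, d, e⟩ h
    ext <;> simp; ring
  · rintro ⟨z, d, e⟩ h
    ring

/-- The symmetry `(t, a, b) ↦ (-t, b, a)` exchanges the two signs of `b - a - t`, so the half sum
is half of the full sum, which vanishes by `t ↦ -t`. -/
lemma sum_zagierSet_half {N : ℤ} (hN : N % 8 = 5) :
    ∑ x ∈ zagierSet N with 0 < x.2.2 - x.2.1 - x.1, x.1 * (x.2.2 ^ 2 - x.2.1 ^ 2) = 0 := by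
  have h1 := sum_zagierSet_neg N (fun z d e => z * (e ^ 2 - d ^ 2))
  have h2 := sum_filter_add_sum_filter_not (zagierSet N) (fun x => 0 < x.2.2 - x.2.1 - x.1)
    (fun x => x.1 * (x.2.2 ^ 2 - x.2.1 ^ 2))
  have h3 : ∑ x ∈ zagierSet N with 0 < x.2.2 - x.2.1 - x.1, x.1 * (x.2.2 ^ 2 - x.2.1 ^ 2)
      = ∑ x ∈ zagierSet N with ¬ 0 < x.2.2 - x.2.1 - x.1, x.1 * (x.2.2 ^ 2 - x.2.1 ^ 2) := by
    refine sum_bij' (fun x _ => (-x.1, x.2.2, x.2.1)) (fun x _ => (-x.1, x.2.2, x.2.1))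
      ?_ ?_ ?_ ?_ ?_
    · rintro ⟨z, d, e⟩ h
      simp only [mem_filter, mem_zagierSet] at *
      obtain ⟨⟨h1, h2, h3⟩, h4⟩ := h
      exact ⟨⟨h2, h1, by linarith⟩, by linarith⟩
    · rintro ⟨z, d, e⟩ h
      rw [mem_filter] at h
      have hodd := odd_of_mem_zagierSet hN h.1
      simp only [mem_filter, mem_zagierSet] at *
      obtain ⟨⟨h1, h2, h3⟩, h4⟩ := h
      exact ⟨⟨h2, h1, by linarith⟩, by omega⟩
    · rintro ⟨z, d, e⟩ h
      simp
    · rintro ⟨z, d, e⟩ h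
      simp
    · rintro ⟨z, d, e⟩ h
      ring
  simp only [neg_mul, sum_neg_distrib] at h1
  linarith

/-- The Liouville-type identity behind the theorem. -/
lemma sum_zagierSet {N : ℤ} (hN : N % 8 = 5) :
    ∑ x ∈ zagierSet N, x.2.1 * (x.2.1 * x.2.2 - x.1 ^ 2) = 0 := by
  have hG : ∑ x ∈ zagierSet N,
      (x.1 + x.2.1) * (2 * x.2.2 - x.1 - x.2.1) * (2 * x.2.2 - x.1) = 0 := by
    rw [← sum_filter_add_sum_filter_not _ (fun x => x.1 + x.2.1 < x.2.2),
      sum_zagierSet_involution, sum_zagierSet_complement hN, sum_zagierSet_half hN, add_zero]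
  have h1 := sum_zagierSet_neg N (fun z d e => (z + d) * (2 * e - z - d) * (2 * e - z))
  have h2 := sum_zagierSet_swap N (fun z d e => 4 * d * (d * e - z ^ 2))
  -- the part of `G` that is even in `z`
  have h3 : ∑ x ∈ zagierSet N,
        (-x.1 + x.2.1) * (2 * x.2.2 - -x.1 - x.2.1) * (2 * x.2.2 - -x.1)
      + ∑ x ∈ zagierSet N, (x.1 + x.2.1) * (2 * x.2.2 - x.1 - x.2.1) * (2 * x.2.2 - x.1)
      = 2 * ∑ x ∈ zagierSet N, 4 * x.2.2 * (x.2.2 * x.2.1 - x.1 ^ 2)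
      - ∑ x ∈ zagierSet N, 4 * x.2.1 * (x.2.1 * x.2.2 - x.1 ^ 2) := by
    rw [mul_sum, ← sum_add_distrib, ← sum_sub_distrib]
    exact sum_congr rfl fun x _ => by ring
  have h4 : ∑ x ∈ zagierSet N, 4 * x.2.1 * (x.2.1 * x.2.2 - x.1 ^ 2)
      = 4 * ∑ x ∈ zagierSet N, x.2.1 * (x.2.1 * x.2.2 - x.1 ^ 2) := by
    rw [mul_sum]
    exact sum_congr rfl fun x _ => by ring
  linarith

/-! ### The two recurrences -/

/-- The sum of `d` over the factorisations `M = 4de` with `d, e > 0`. -/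
noncomputable def divisorSum (M : ℤ) : ℤ :=
  ∑ x ∈ (Icc 1 M ×ˢ Icc 1 M) with 4 * x.1 * x.2 = M, x.1

lemma mem_divisorSum {M d e : ℤ} :
    (d, e) ∈ (Icc 1 M ×ˢ Icc 1 M).filter (fun x : ℤ × ℤ => 4 * x.1 * x.2 = M) ↔
      0 < d ∧ 0 < e ∧ 4 * d * e = M := by
  simp only [mem_filter, mem_product, mem_Icc]
  constructor
  · rintro ⟨⟨⟨h1, _⟩, h2, _⟩, h⟩
    exact ⟨by omega, by omega, h⟩
  · rintro ⟨hd, he, h⟩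
    have hde : 0 < d * e := mul_pos hd he
    have h1 : d ≤ d * e := by nlinarith
    have h2 : e ≤ d * e := by nlinarith
    refine ⟨⟨⟨?_, ?_⟩, ⟨?_, ?_⟩⟩, h⟩ <;> linarith

lemma sum_divisorSum {N : ℤ} (hN : N % 8 = 5) :
    ∑ z ∈ Icc (-N) N with z % 2 = 1, (N - 5 * z ^ 2) * divisorSum (N - z ^ 2) = 0 := by
  have key : ∑ z ∈ Icc (-N) N with z % 2 = 1, (N - 5 * z ^ 2) * divisorSum (N - z ^ 2)
      = ∑ x ∈ zagierSet N, 4 * (x.2.1 * (x.2.1 * x.2.2 - x.1 ^ 2)) := by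
    simp only [divisorSum, mul_sum]
    rw [sum_sigma']
    refine sum_bij' (fun x _ => (x.1, x.2.1, x.2.2)) (fun x _ => ⟨x.1, x.2.1, x.2.2⟩) ?_ ?_ ?_ ?_ ?_
    · rintro ⟨z, d, e⟩ h
      rw [mem_sigma, mem_divisorSum] at h
      rw [mem_zagierSet]
      exact ⟨h.2.1, h.2.2.1, by linarith [h.2.2.2]⟩
    · rintro ⟨z, d, e⟩ h
      have hodd := odd_of_mem_zagierSet hN h
      have hz : z ∈ Icc (-N) N := by
        simp only [zagierSet, mem_filter, mem_product] at h
        exact h.1.1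
      rw [mem_zagierSet] at h
      rw [mem_sigma, mem_divisorSum]
      exact ⟨mem_filter.2 ⟨hz, hodd.1⟩, h.1, h.2.1, by linarith [h.2.2]⟩
    · rintro ⟨z, d, e⟩ h; rfl
    · rintro ⟨z, d, e⟩ h; rfl
    · rintro ⟨z, d, e⟩ h
      rw [mem_sigma, mem_divisorSum] at h
      have := h.2.2.2
      simp only at this ⊢
      have hN' : N = z ^ 2 + 4 * d * e := by linarith
      rw [hN']
      ring
  rw [key, ← mul_sum, sum_zagierSet hN, mul_zero]

/-- The representations of `M` as an ordered sum of `k` odd squares; the box only serves to make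
the set a `Finset`, see `mem_oddReps`. -/
noncomputable def oddReps (k : ℕ) (M : ℤ) : Finset (Fin k → ℤ) :=
  (Fintype.piFinset fun _ => Icc (-M) M).filter fun x => (∀ i, x i % 2 = 1) ∧ ∑ i, x i ^ 2 = M

lemma mem_Icc_of_sum_sq {k : ℕ} {M : ℤ} {x : Fin k → ℤ} (h : ∑ i, x i ^ 2 = M) (i : Fin k) :
    x i ∈ Icc (-M) M := by
  have h1 : x i ^ 2 ≤ M := by
    rw [← h]
    exact single_le_sum (f := fun i => x i ^ 2) (fun j _ => sq_nonneg _) (mem_univ i)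
  rw [mem_Icc]
  constructor <;> nlinarith [Int.le_self_sq (x i), Int.le_self_sq (-x i)]

lemma mem_oddReps {k : ℕ} {M : ℤ} {x : Fin k → ℤ} :
    x ∈ oddReps k M ↔ (∀ i, x i % 2 = 1) ∧ ∑ i, x i ^ 2 = M := by
  rw [oddReps, mem_filter, Fintype.mem_piFinset]
  exact ⟨fun h => h.2, fun h => ⟨mem_Icc_of_sum_sq h.2, h⟩⟩

/-- By symmetry of the coordinates, `∑ 5x₀²` equals `∑ (x₀² + ⋯ + x₄²) = ∑ N`. -/
lemma sum_oddReps_five (N : ℤ) : ∑ x ∈ oddReps 5 N, (N - 5 * x 0 ^ 2) = 0 := by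
  have h1 : ∀ i : Fin 5, ∑ x ∈ oddReps 5 N, x i ^ 2 = ∑ x ∈ oddReps 5 N, x 0 ^ 2 := by
    intro i
    have hmem : ∀ x ∈ oddReps 5 N, x ∘ Equiv.swap 0 i ∈ oddReps 5 N := by
      intro x hx
      rw [mem_oddReps] at *
      refine ⟨fun j => hx.1 _, ?_⟩
      rw [← hx.2]
      exact Equiv.sum_comp (Equiv.swap 0 i) (fun j => x j ^ 2)
    refine sum_bij' (fun x _ => x ∘ Equiv.swap 0 i) (fun x _ => x ∘ Equiv.swap 0 i)
      hmem hmem ?_ ?_ ?_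
    · intro x _; ext j; simp
    · intro x _; ext j; simp
    · intro x _; simp
  have h2 : ∑ x ∈ oddReps 5 N, N = ∑ x ∈ oddReps 5 N, ∑ i, x i ^ 2 :=
    sum_congr rfl fun x hx => (mem_oddReps.1 hx).2.symm
  rw [sum_sub_distrib, h2, sum_comm, sum_congr rfl fun i _ => h1 i, ← mul_sum]
  simp

lemma sum_card_oddReps (N : ℤ) :
    ∑ z ∈ Icc (-N) N with z % 2 = 1, (N - 5 * z ^ 2) * ((oddReps 4 (N - z ^ 2)).card : ℤ) = 0 := by
  rw [← sum_oddReps_five N]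
  have : ∀ z : ℤ, (N - 5 * z ^ 2) * ((oddReps 4 (N - z ^ 2)).card : ℤ)
      = ∑ y ∈ oddReps 4 (N - z ^ 2), (N - 5 * z ^ 2) := by
    intro z
    rw [sum_const, nsmul_eq_mul, mul_comm]
  simp only [this]
  rw [sum_sigma']
  refine sum_bij' (fun x _ => Fin.cons x.1 x.2) (fun x _ => ⟨x 0, Fin.tail x⟩) ?_ ?_ ?_ ?_ ?_
  · rintro ⟨z, y⟩ h
    simp only [mem_sigma, mem_filter, mem_oddReps] at *
    refine ⟨fun i => ?_, ?_⟩
    · refine Fin.cases ?_ (fun j => ?_) i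
      · simpa using h.1.2
      · simpa using h.2.1 j
    · rw [Fin.sum_univ_succ]
      simp only [Fin.cons_zero, Fin.cons_succ]
      linarith [h.2.2]
  · intro x h
    simp only [mem_sigma, mem_filter, mem_oddReps] at *
    refine ⟨⟨mem_Icc_of_sum_sq h.2 0, h.1 0⟩, fun i => h.1 _, ?_⟩
    have := h.2
    rw [Fin.sum_univ_succ] at this
    simp only [Fin.tail]
    linarith
  · rintro ⟨z, y⟩ h
    simp
  · intro x h
    simp
  · rintro ⟨z, y⟩ h
    simp

/-! ### Sums of four odd squares -/

lemma card_oddReps_four : (oddReps 4 4).card = 16 := by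
  have : oddReps 4 4 = Fintype.piFinset fun _ : Fin 4 => ({-1, 1} : Finset ℤ) := by
    ext x
    rw [mem_oddReps, Fintype.mem_piFinset]
    simp only [mem_insert, mem_singleton]
    constructor
    · rintro ⟨h1, h2⟩
      have h3 : ∀ i, 1 ≤ x i ^ 2 := fun i => by
        have := sq_emod_eight (h1 i)
        have := sq_nonneg (x i)
        omega
      have h4 : ∀ i, x i ^ 2 = 1 := by
        rw [Fin.sum_univ_four] at h2
        have a := h3 0
        have b := h3 1
        have c := h3 2
        have d := h3 3
        intro i
        fin_cases i <;> simp only [Fin.zero_eta, Fin.mk_one, Fin.reduceFinMk] <;> omega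
      exact fun i => (sq_eq_sq_iff_eq_or_eq_neg.1 ((h4 i).trans (one_pow 2).symm)).symm
    · intro h
      have h4 : ∀ i, x i ^ 2 = 1 := fun i => by rcases h i with h | h <;> simp [h]
      refine ⟨fun i => by rcases h i with h | h <;> simp [h], by simp [h4]⟩
  rw [this, Fintype.card_piFinset]
  simp

lemma divisorSum_four : divisorSum 4 = 1 := by
  have : (Icc 1 4 ×ˢ Icc 1 4).filter (fun x : ℤ × ℤ => 4 * x.1 * x.2 = 4) = {(1, 1)} := by
    decide +kernel
  rw [divisorSum, this, sum_singleton]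

/-- Four odd squares: the two recurrences determine both sides from their value at `4`. The case
`M = 4` is separate because there the leading coefficient `N - 5` is zero. -/
lemma card_oddReps_eq (M : ℕ) (hM : M % 8 = 4) :
    ((oddReps 4 M).card : ℤ) = 16 * divisorSum M := by
  induction M using Nat.strong_induction_on with
  | _ M ih =>
  rcases eq_or_ne M 4 with rfl | h4
  · have := card_oddReps_four
    have := divisorSum_four
    simp_all
  set N : ℤ := M + 1 with hNdef
  have hN : N % 8 = 5 := by omega
  have hrec : ∑ z ∈ Icc (-N) N with z % 2 = 1, (N - 5 * z ^ 2) *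
      (((oddReps 4 (N - z ^ 2)).card : ℤ) - 16 * divisorSum (N - z ^ 2)) = 0 := by
    have h1 := sum_card_oddReps N
    have h2 := sum_divisorSum hN
    simp only [mul_sub, sum_sub_distrib, h1, mul_left_comm _ (16 : ℤ), ← mul_sum, h2]
    simp
  -- only `z = ±1` survives, by the induction hypothesis
  have hsub : ({-1, 1} : Finset ℤ) ⊆ (Icc (-N) N).filter (fun z => z % 2 = 1) := by
    intro z hz
    simp only [mem_insert, mem_singleton] at hz
    simp only [mem_filter, mem_Icc]
    omega
  rw [← sum_subset hsub, sum_pair (by norm_num)] at hrec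
  · have hM1 : N - 1 = M := by omega
    norm_num [hM1] at hrec
    rcases hrec with h | h
    · omega
    · omega
  · intro z hz hz'
    simp only [mem_insert, mem_singleton, mem_filter, mem_Icc, not_or] at hz hz'
    have h8 := sq_emod_eight hz.2
    have hz9 : 9 ≤ z ^ 2 := by
      have : z ≤ -3 ∨ 3 ≤ z := by omega
      rcases this with h | h <;> nlinarith
    refine mul_eq_zero_of_right _ ?_
    rcases lt_or_ge (N - z ^ 2) 0 with hneg | hpos
    · have e1 : oddReps 4 (N - z ^ 2) = ∅ := by
        refine eq_empty_of_forall_notMem fun x hx => ?_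
        have := (mem_oddReps.1 hx).2
        have h0 : 0 ≤ ∑ i, x i ^ 2 := sum_nonneg fun i _ => sq_nonneg _
        omega
      have e2 : divisorSum (N - z ^ 2) = 0 := by
        rw [divisorSum, Icc_eq_empty (by omega)]
        simp
      simp [e1, e2]
    · obtain ⟨M', hM'⟩ := Int.eq_ofNat_of_zero_le hpos
      have := ih M' (by omega) (by omega)
      rw [hM', this, sub_self]

lemma divisorSum_eq (m : ℕ) : divisorSum (4 * m) = ∑ d ∈ m.divisors, (d : ℤ) := by
  rw [divisorSum, ← Nat.sum_divisorsAntidiagonal (fun d _ => (d : ℤ))]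
  symm
  refine sum_bij' (fun x _ => ((x.1 : ℤ), (x.2 : ℤ))) (fun x _ => (x.1.toNat, x.2.toNat))
    ?_ ?_ ?_ ?_ ?_
  · rintro ⟨d, e⟩ h
    rw [Nat.mem_divisorsAntidiagonal] at h
    rw [mem_divisorSum]
    obtain ⟨h1, h2⟩ := h
    simp only at h1
    subst h1
    have := Nat.pos_of_ne_zero (left_ne_zero_of_mul h2)
    have := Nat.pos_of_ne_zero (right_ne_zero_of_mul h2)
    refine ⟨by omega, by omega, by push_cast; ring⟩
  · rintro ⟨d, e⟩ h
    rw [mem_divisorSum] at h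
    obtain ⟨h1, h2, h3⟩ := h
    lift d to ℕ using h1.le
    lift e to ℕ using h2.le
    rw [Nat.mem_divisorsAntidiagonal]
    have h4 : d * e = m := by
      have : (d * e : ℤ) = m := by linarith
      exact_mod_cast this
    refine ⟨by simpa using h4, ?_⟩
    rw [← h4]
    exact Nat.mul_ne_zero (by omega) (by omega)
  · rintro ⟨d, e⟩ h
    simp
  · rintro ⟨d, e⟩ h
    rw [mem_divisorSum] at h
    simp [h.1.le, h.2.1.le]
  · rintro ⟨d, e⟩ h
    rfl

/-! ### Sums of four arbitrary squares -/

/-- The representations of `n` as an ordered sum of four squares, as a `Finset`. -/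
noncomputable def fourReps (n : ℤ) : Finset (Fin 4 → ℤ) :=
  (Fintype.piFinset fun _ => Icc (-n) n).filter fun x => ∑ i, x i ^ 2 = n

lemma mem_fourReps' {n : ℤ} {x : Fin 4 → ℤ} : x ∈ fourReps n ↔ ∑ i, x i ^ 2 = n := by
  rw [fourReps, mem_filter, Fintype.mem_piFinset]
  exact ⟨fun h => h.2, fun h => ⟨mem_Icc_of_sum_sq h, h⟩⟩

lemma mem_fourReps {n : ℤ} {x : Fin 4 → ℤ} :
    x ∈ fourReps n ↔ x 0 ^ 2 + x 1 ^ 2 + x 2 ^ 2 + x 3 ^ 2 = n := by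
  rw [mem_fourReps', Fin.sum_univ_four]

lemma sumOfSquaresRep_four (n : ℕ) : sumOfSquaresRep 4 n = (fourReps n).card := by
  rw [sumOfSquaresRep, ← Set.ncard_coe_finset]
  congr 1
  ext x
  simp [mem_fourReps']

lemma sq_emod_four (z : ℤ) : z % 2 = 0 ∧ z ^ 2 % 4 = 0 ∨ z % 2 = 1 ∧ z ^ 2 % 4 = 1 := by
  rcases Int.emod_two_eq_zero_or_one z with h | h
  · obtain ⟨k, rfl⟩ := Int.dvd_of_emod_eq_zero h
    left
    ring_nf
    omega
  · have := sq_emod_eight h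
    omega

/-- The map `(x₀ + x₁, x₀ - x₁, x₂ + x₃, x₂ - x₃)` doubles the sum of squares. -/
lemma card_fourReps_paired (n : ℤ) :
    ((fourReps (2 * n)).filter fun y => y 0 % 2 = y 1 % 2 ∧ y 2 % 2 = y 3 % 2).card
      = (fourReps n).card := by
  symm
  refine card_bij' (fun x _ => ![x 0 + x 1, x 0 - x 1, x 2 + x 3, x 2 - x 3])
    (fun y _ => ![(y 0 + y 1) / 2, (y 0 - y 1) / 2, (y 2 + y 3) / 2, (y 2 - y 3) / 2]) ?_ ?_ ?_ ?_
  · intro x hx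
    rw [mem_fourReps] at hx
    rw [mem_filter, mem_fourReps]
    simp only [Matrix.cons_val]
    exact ⟨by linarith, by omega, by omega⟩
  · intro y hy
    rw [mem_filter, mem_fourReps] at hy
    rw [mem_fourReps]
    simp only [Matrix.cons_val]
    obtain ⟨h, h1, h2⟩ := hy
    obtain ⟨a, ha⟩ : ∃ a, (y 0 + y 1) / 2 = a := ⟨_, rfl⟩
    obtain ⟨b, hb⟩ : ∃ b, (y 0 - y 1) / 2 = b := ⟨_, rfl⟩
    obtain ⟨c, hc⟩ : ∃ c, (y 2 + y 3) / 2 = c := ⟨_, rfl⟩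
    obtain ⟨d, hd⟩ : ∃ d, (y 2 - y 3) / 2 = d := ⟨_, rfl⟩
    have e0 : y 0 = a + b := by omega
    have e1 : y 1 = a - b := by omega
    have e2 : y 2 = c + d := by omega
    have e3 : y 3 = c - d := by omega
    rw [ha, hb, hc, hd]
    rw [e0, e1, e2, e3] at h
    linarith
  · intro x hx
    ext i
    fin_cases i <;> simp <;> omega
  · intro y hy
    rw [mem_filter] at hy
    ext i
    fin_cases i <;> simp <;> omega

lemma card_fourReps_double_of_even {n : ℤ} (hn : n % 2 = 0) :
    (fourReps (2 * n)).card = (fourReps n).card := by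
  rw [← card_fourReps_paired n, filter_true_of_mem]
  intro y hy
  rw [mem_fourReps] at hy
  have := sq_emod_four (y 0)
  have := sq_emod_four (y 1)
  have := sq_emod_four (y 2)
  have := sq_emod_four (y 3)
  omega

lemma card_fourReps_perm (n : ℤ) (e : Equiv.Perm (Fin 4)) :
    ((fourReps n).filter fun y => y (e 0) % 2 = y (e 1) % 2 ∧ y (e 2) % 2 = y (e 3) % 2).card
      = ((fourReps n).filter fun y => y 0 % 2 = y 1 % 2 ∧ y 2 % 2 = y 3 % 2).card := by
  refine card_bij' (fun y _ => y ∘ e) (fun y _ => y ∘ e.symm) ?_ ?_ ?_ ?_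
  · intro y hy
    rw [mem_filter, mem_fourReps'] at *
    exact ⟨(Equiv.sum_comp e (fun j => y j ^ 2)).trans hy.1, hy.2⟩
  · intro y hy
    rw [mem_filter, mem_fourReps'] at *
    exact ⟨(Equiv.sum_comp e.symm (fun j => y j ^ 2)).trans hy.1, by simpa using hy.2⟩
  · intro y _
    ext i
    simp
  · intro y _
    ext i
    simp

/-- For odd `n`, exactly two coordinates of a representation of `2n` are odd, so exactly one of the three
pairings of the coordinates matches the parities. -/
lemma card_fourReps_double_of_odd {n : ℤ} (hn : n % 2 = 1) :
    (fourReps (2 * n)).card = 3 * (fourReps n).card := by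
  have h1 := card_fourReps_perm (2 * n) (Equiv.swap 1 2)
  have h2 := card_fourReps_perm (2 * n) (Equiv.swap 1 3)
  rw [card_fourReps_paired] at h1 h2
  have h3 := card_fourReps_paired n
  have e1 : (Equiv.swap (1 : Fin 4) 2) 0 = 0 ∧ (Equiv.swap (1 : Fin 4) 2) 1 = 2 ∧
    (Equiv.swap (1 : Fin 4) 2) 2 = 1 ∧ (Equiv.swap (1 : Fin 4) 2) 3 = 3 := by decide
  have e2 : (Equiv.swap (1 : Fin 4) 3) 0 = 0 ∧ (Equiv.swap (1 : Fin 4) 3) 1 = 3 ∧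
    (Equiv.swap (1 : Fin 4) 3) 2 = 2 ∧ (Equiv.swap (1 : Fin 4) 3) 3 = 1 := by decide
  simp only [e1] at h1
  simp only [e2] at h2
  rw [card_filter] at h1 h2 h3
  rw [card_eq_sum_ones]
  have : ∀ y ∈ fourReps (2 * n), 1 =
      (if y 0 % 2 = y 1 % 2 ∧ y 2 % 2 = y 3 % 2 then 1 else 0)
      + (if y 0 % 2 = y 2 % 2 ∧ y 1 % 2 = y 3 % 2 then 1 else 0)
      + (if y 0 % 2 = y 3 % 2 ∧ y 2 % 2 = y 1 % 2 then 1 else 0) := by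
    intro y hy
    rw [mem_fourReps] at hy
    have := sq_emod_four (y 0)
    have := sq_emod_four (y 1)
    have := sq_emod_four (y 2)
    have := sq_emod_four (y 3)
    split_ifs <;> omega
  rw [sum_congr rfl this, sum_add_distrib, sum_add_distrib, h1, h2, h3]
  ring

/-- The coordinates of a representation of `4n` are all odd or all even. -/
lemma card_fourReps_four_mul (n : ℤ) :
    (fourReps (4 * n)).card = (oddReps 4 (4 * n)).card + (fourReps n).card := by
  rw [← card_filter_add_card_filter_not (s := fourReps (4 * n)) (fun y => y 0 % 2 = 1)]
  congr 1
  · congr 1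
    ext y
    rw [mem_filter, mem_fourReps, mem_oddReps, Fin.sum_univ_four]
    constructor
    · rintro ⟨hy, h0⟩
      have := sq_emod_four (y 0)
      have := sq_emod_four (y 1)
      have := sq_emod_four (y 2)
      have := sq_emod_four (y 3)
      refine ⟨fun i => ?_, hy⟩
      fin_cases i <;> simp only [Fin.zero_eta, Fin.mk_one, Fin.reduceFinMk] <;> omega
    · exact fun h => ⟨h.2, h.1 0⟩
  · have heven : ∀ y ∈ (fourReps (4 * n)).filter (fun y => ¬ y 0 % 2 = 1), ∀ i, y i % 2 = 0 := by
      intro y hy i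
      rw [mem_filter, mem_fourReps] at hy
      have := sq_emod_four (y 0)
      have := sq_emod_four (y 1)
      have := sq_emod_four (y 2)
      have := sq_emod_four (y 3)
      fin_cases i <;> simp only [Fin.zero_eta, Fin.mk_one, Fin.reduceFinMk] <;> omega
    have hhalf : ∀ y ∈ (fourReps (4 * n)).filter (fun y => ¬ y 0 % 2 = 1),
        ∀ i, 2 * (y i / 2) = y i := fun y hy i => by
      have := heven y hy i
      omega
    refine card_bij' (fun y _ i => y i / 2) (fun x _ i => 2 * x i) ?_ ?_ ?_ ?_
    · intro y hy
      have h := hhalf y hy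
      rw [mem_filter, mem_fourReps] at hy
      rw [mem_fourReps]
      have := hy.1
      rw [← h 0, ← h 1, ← h 2, ← h 3] at this
      linarith
    · intro x hx
      rw [mem_fourReps] at hx
      rw [mem_filter, mem_fourReps]
      refine ⟨by linarith, ?_⟩
      simp
    · intro y hy
      ext i
      exact hhalf y hy i
    · intro x _
      ext i
      simp

lemma card_fourReps_of_odd {m : ℕ} (hm : Odd m) :
    (fourReps m).card = 8 * ∑ d ∈ m.divisors, d := by
  have hm2 : m % 2 = 1 := Nat.odd_iff.1 hm
  have h1 := card_fourReps_double_of_odd (n := m) (by omega)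
  have h2 := card_fourReps_double_of_even (n := 2 * m) (by omega)
  have h3 := card_fourReps_four_mul m
  have h4 := card_oddReps_eq (4 * m) (by omega)
  have h5 := divisorSum_eq m
  push_cast at h4
  rw [h5] at h4
  rw [show (2 * (2 * m) : ℤ) = 4 * m by ring] at h2
  zify at *
  linarith

theorem stmt_0 (n : ℕ) :
    (Odd n → sumOfSquaresRep 4 n = 8 * ∑ d ∈ n.divisors, d) ∧
    (∀ α m : ℕ, 1 ≤ α → Odd m → n = 2 ^ α * m →
      sumOfSquaresRep 4 n = 24 * ∑ d ∈ m.divisors, d) := by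
  refine ⟨fun hn => by rw [sumOfSquaresRep_four, card_fourReps_of_odd hn], ?_⟩
  rintro α m hα hm rfl
  rw [sumOfSquaresRep_four]
  have hm2 : m % 2 = 1 := Nat.odd_iff.1 hm
  induction α, hα using Nat.le_induction with
  | base =>
    have h := card_fourReps_double_of_odd (n := m) (by omega)
    rw [card_fourReps_of_odd hm] at h
    rw [pow_one, Nat.cast_mul, Nat.cast_two, h]
    ring
  | succ α hα ih =>
    obtain ⟨k, rfl⟩ := Nat.exists_eq_add_of_le' hα
    have h := card_fourReps_double_of_even (n := ((2 ^ (k + 1) * m : ℕ) : ℤ)) (by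
      push_cast
      rw [pow_succ', mul_assoc]
      exact Int.mul_emod_right _ _)
    rw [← ih, ← h]
    congr 2
    push_cast
    ring
end

section
/- For every positive integer n written as n = 2^α·m with m odd, r_8(n) = 16·σ_3(m) if α = 0, and r_8(n) = 16·(2^{3α+3} − 15)/7·σ_3(m) if α ≥ 1, where r_8(n) is the number of representations of n as a sum of 8 integer squares. -/
/-! ### Liouville's identity -/

/-- The solutions `(u, d, e)` of `u² + d e = n` in integers with `d, e ≥ 1`. The box only makes the
set visibly finite; see `mem_sol`. -/
noncomputable def sol (n : ℤ) : Finset (ℤ × ℤ × ℤ) :=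
  (Finset.Icc (-n) n ×ˢ Finset.Icc 1 n ×ˢ Finset.Icc 1 n).filter
    fun p => p.1 ^ 2 + p.2.1 * p.2.2 = n

lemma mem_sol {n u d e : ℤ} :
    (u, d, e) ∈ sol n ↔ 1 ≤ d ∧ 1 ≤ e ∧ u ^ 2 + d * e = n := by
  simp only [sol, Finset.mem_filter, Finset.mem_product, Finset.mem_Icc]
  constructor
  · tauto
  · rintro ⟨hd, he, h⟩
    have h1 : 0 ≤ (d - 1) * (e - 1) := mul_nonneg (by lia) (by lia)
    have := sq_nonneg u
    refine ⟨⟨⟨?_, ?_⟩, ⟨hd, ?_⟩, he, ?_⟩, h⟩ <;> nlinarith [sq_nonneg (u - 1), sq_nonneg (u + 1)]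

lemma sum_sol_neg {n : ℤ} (f : ℤ × ℤ × ℤ → ℤ) :
    ∑ p ∈ sol n, f p = ∑ p ∈ sol n, f (-p.1, p.2.1, p.2.2) := by
  refine Finset.sum_nbij' (fun p => (-p.1, p.2.1, p.2.2)) (fun p => (-p.1, p.2.1, p.2.2)) ?_ ?_ ?_ ?_ ?_ <;>
    rintro ⟨u, d, e⟩ h <;> simp only [mem_sol, neg_neg] at h ⊢
  all_goals refine ⟨h.1, h.2.1, ?_⟩; linarith [h.2.2]

lemma sum_sol_swap {n : ℤ} (f : ℤ × ℤ × ℤ → ℤ) :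
    ∑ p ∈ sol n, f p = ∑ p ∈ sol n, f (p.1, p.2.2, p.2.1) := by
  refine Finset.sum_nbij' (fun p => (p.1, p.2.2, p.2.1)) (fun p => (p.1, p.2.2, p.2.1)) ?_ ?_ ?_ ?_ ?_ <;>
    rintro ⟨u, d, e⟩ h <;> simp only [mem_sol] at h ⊢
  all_goals refine ⟨h.2.1, h.1, ?_⟩; linarith [h.2.2]

/-- Liouville's identity. The last two sums are the contributions of the boundary planes `x = z` and
`2y = z` of the two regions on the quadric `4n = 4y² + x² - z²`. -/
lemma liouville {n : ℤ} {F : ℤ → ℤ → ℤ → ℤ} (hodd : ∀ x y z, F (-x) y z = -F x y z)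
    (heven : ∀ x y z, F x (-y) (-z) = F x y z) :
    2 * ∑ p ∈ sol n, F (p.2.2 - 2 * p.1) (p.1 + p.2.1) (2 * p.1 + 2 * p.2.1 - p.2.2) =
      ∑ p ∈ sol n, F (p.2.1 + p.2.2) p.1 (p.2.1 - p.2.2)
      + 2 * ∑ p ∈ sol n with 2 * p.1 + p.2.1 = p.2.2, F p.2.1 (p.1 + p.2.1) p.2.1
      - ∑ p ∈ sol n with 2 * p.1 = p.2.1 - p.2.2, F (p.2.1 + p.2.2) p.1 (2 * p.1) := by
  set G : ℤ × ℤ × ℤ → ℤ := fun p =>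
    F (p.2.2 - 2 * p.1) (p.1 + p.2.1) (2 * p.1 + 2 * p.2.1 - p.2.2) with hG
  set H : ℤ × ℤ × ℤ → ℤ := fun p => F (p.2.1 + p.2.2) p.1 (p.2.1 - p.2.2) with hH
  have tri : ∀ f g : ℤ × ℤ × ℤ → ℤ, ∑ p ∈ sol n, f p = ∑ p ∈ sol n with 0 < g p, f p +
      ∑ p ∈ sol n with g p = 0, f p + ∑ p ∈ sol n with g p < 0, f p := by
    intro f g
    simp only [Finset.sum_filter, ← Finset.sum_add_distrib]
    refine Finset.sum_congr rfl fun p _ => ?_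
    rcases lt_trichotomy (g p) 0 with h | h | h
    · simp [h, h.ne, h.not_gt]
    · simp [h]
    · simp [h, h.ne', h.not_gt]
  -- The reflection `x ↦ -x` in the coordinates of `sol n`.
  have hpos : ∑ p ∈ sol n with 0 < 2 * p.1 + p.2.1 - p.2.2, G p = 0 := by
    have : ∑ p ∈ sol n with 0 < 2 * p.1 + p.2.1 - p.2.2, G p =
        ∑ p ∈ sol n with 0 < 2 * p.1 + p.2.1 - p.2.2, -G p := by
      refine Finset.sum_nbij' (fun p => (p.2.2 - p.1, 2 * p.1 + p.2.1 - p.2.2, p.2.2))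
        (fun p => (p.2.2 - p.1, 2 * p.1 + p.2.1 - p.2.2, p.2.2)) ?_ ?_ ?_ ?_ ?_ <;>
        rintro ⟨u, d, e⟩ h <;> simp only [Finset.mem_filter, mem_sol] at h ⊢
      · obtain ⟨⟨h1, h2, h3⟩, h4⟩ := h
        exact ⟨⟨by lia, h2, by rw [← h3]; ring⟩, by lia⟩
      · obtain ⟨⟨h1, h2, h3⟩, h4⟩ := h
        exact ⟨⟨by lia, h2, by rw [← h3]; ring⟩, by lia⟩
      · ext <;> simp; ring
      · ext <;> simp; ring
      · simp only [hG, ← hodd]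
        congr 1 <;> ring
    rw [Finset.sum_neg_distrib] at this
    lia
  -- The part `x > |z|`, `2y > z` of the first region, read off in the coordinates of the second.
  have hneg : ∑ p ∈ sol n with 2 * p.1 + p.2.1 - p.2.2 < 0, G p =
      ∑ p ∈ sol n with 0 < 2 * p.1 - p.2.1 + p.2.2, H p := by
    refine Finset.sum_nbij' (fun p => (p.1 + p.2.1, p.2.1, p.2.2 - 2 * p.1 - p.2.1))
      (fun p => (p.1 - p.2.1, p.2.1, 2 * p.1 - p.2.1 + p.2.2)) ?_ ?_ ?_ ?_ ?_ <;>
      rintro ⟨u, d, e⟩ h <;> simp only [Finset.mem_filter, mem_sol] at h ⊢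
    · obtain ⟨⟨h1, h2, h3⟩, h4⟩ := h
      exact ⟨⟨h1, by lia, by rw [← h3]; ring⟩, by lia⟩
    · obtain ⟨⟨h1, h2, h3⟩, h4⟩ := h
      exact ⟨⟨h1, by lia, by rw [← h3]; ring⟩, by lia⟩
    · ext <;> simp; ring
    · ext <;> simp; ring
    · simp only [hG, hH]
      congr 1 <;> ring
  -- The symmetry `(y, z) ↦ (-y, -z)`.
  have hsym : ∑ p ∈ sol n with 2 * p.1 - p.2.1 + p.2.2 < 0, H p =
      ∑ p ∈ sol n with 0 < 2 * p.1 - p.2.1 + p.2.2, H p := by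
    refine Finset.sum_nbij' (fun p => (-p.1, p.2.2, p.2.1))
      (fun p => (-p.1, p.2.2, p.2.1)) ?_ ?_ ?_ ?_ ?_ <;>
      rintro ⟨u, d, e⟩ h <;> simp only [Finset.mem_filter, mem_sol] at h ⊢
    · obtain ⟨⟨h1, h2, h3⟩, h4⟩ := h
      exact ⟨⟨h2, h1, by rw [← h3]; ring⟩, by lia⟩
    · obtain ⟨⟨h1, h2, h3⟩, h4⟩ := h
      exact ⟨⟨h2, h1, by rw [← h3]; ring⟩, by lia⟩
    · simp
    · simp
    · simp only [hH]
      rw [← heven]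
      congr 1 <;> ring
  have hG0 : ∑ p ∈ sol n with 2 * p.1 + p.2.1 - p.2.2 = 0, G p =
      ∑ p ∈ sol n with 2 * p.1 + p.2.1 = p.2.2, F p.2.1 (p.1 + p.2.1) p.2.1 := by
    refine Finset.sum_congr (Finset.filter_congr fun p _ => sub_eq_zero) fun p hp => ?_
    have := (Finset.mem_filter.1 hp).2
    simp only [hG, ← this]
    congr 1 <;> ring
  have hH0 : ∑ p ∈ sol n with 2 * p.1 - p.2.1 + p.2.2 = 0, H p =
      ∑ p ∈ sol n with 2 * p.1 = p.2.1 - p.2.2, F (p.2.1 + p.2.2) p.1 (2 * p.1) := by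
    refine Finset.sum_congr (Finset.filter_congr fun p _ => by lia) fun p hp => ?_
    have := (Finset.mem_filter.1 hp).2
    simp only [hH, this]
  have e1 := tri G (fun p => 2 * p.1 + p.2.1 - p.2.2)
  have e2 := tri H (fun p => 2 * p.1 - p.2.1 + p.2.2)
  lia

/-! ### Boundary terms -/

lemma diag_sum_left {l : ℕ} (hl : 0 < l) (F : ℤ → ℤ → ℤ → ℤ) :
    ∑ p ∈ sol ((l : ℤ) ^ 2) with 2 * p.1 + p.2.1 = p.2.2, F p.2.1 (p.1 + p.2.1) p.2.1 =
      ∑ j ∈ Finset.Icc 1 (2 * (l : ℤ) - 1), F j l j := by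
  refine Finset.sum_nbij' (fun p => p.2.1) (fun j => (l - j, j, 2 * l - j)) ?_ ?_ ?_ ?_ ?_
  · rintro ⟨u, d, e⟩ h
    simp only [Finset.mem_filter, mem_sol, Finset.mem_Icc] at h ⊢
    obtain ⟨⟨h1, h2, h3⟩, h4⟩ := h
    have : u + d = l := by
      refine (sq_eq_sq₀ (by lia) (by lia)).1 ?_
      rw [← h3, ← h4]; ring
    lia
  · intro j h
    simp only [Finset.mem_filter, mem_sol, Finset.mem_Icc] at h ⊢
    exact ⟨⟨by lia, by lia, by ring⟩, by ring⟩
  · rintro ⟨u, d, e⟩ h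
    simp only [Finset.mem_filter, mem_sol] at h ⊢
    obtain ⟨⟨h1, h2, h3⟩, h4⟩ := h
    have : u + d = l := by
      refine (sq_eq_sq₀ (by lia) (by lia)).1 ?_
      rw [← h3, ← h4]; ring
    ext <;> simp <;> lia
  · simp
  · rintro ⟨u, d, e⟩ h
    simp only [Finset.mem_filter, mem_sol] at h ⊢
    obtain ⟨⟨h1, h2, h3⟩, h4⟩ := h
    have : u + d = l := by
      refine (sq_eq_sq₀ (by lia) (by lia)).1 ?_
      rw [← h3, ← h4]; ring
    rw [this]

lemma diag_sum_right {l : ℕ} (hl : 0 < l) (F : ℤ → ℤ → ℤ → ℤ) :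
    ∑ p ∈ sol ((l : ℤ) ^ 2) with 2 * p.1 = p.2.1 - p.2.2, F (p.2.1 + p.2.2) p.1 (2 * p.1) =
      ∑ j ∈ Finset.Icc 1 (2 * (l : ℤ) - 1), F (2 * l) (j - l) (2 * (j - l)) := by
  have key : ∀ u d e : ℤ, 1 ≤ d → 1 ≤ e → u ^ 2 + d * e = (l : ℤ) ^ 2 → 2 * u = d - e →
      d + e = 2 * l := by
    intro u d e h1 h2 h3 h4
    refine (sq_eq_sq₀ (by lia) (by lia)).1 ?_
    have : (2 * u) ^ 2 = (d - e) ^ 2 := by rw [h4]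
    linarith
  refine Finset.sum_nbij' (fun p => p.2.1) (fun j => (j - l, j, 2 * l - j)) ?_ ?_ ?_ ?_ ?_
  · rintro ⟨u, d, e⟩ h
    simp only [Finset.mem_filter, mem_sol, Finset.mem_Icc] at h ⊢
    obtain ⟨⟨h1, h2, h3⟩, h4⟩ := h
    have := key u d e h1 h2 h3 h4
    lia
  · intro j h
    simp only [Finset.mem_filter, mem_sol, Finset.mem_Icc] at h ⊢
    exact ⟨⟨by lia, by lia, by ring⟩, by ring⟩
  · rintro ⟨u, d, e⟩ h
    simp only [Finset.mem_filter, mem_sol] at h ⊢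
    obtain ⟨⟨h1, h2, h3⟩, h4⟩ := h
    have := key u d e h1 h2 h3 h4
    ext <;> simp <;> lia
  · simp
  · rintro ⟨u, d, e⟩ h
    simp only [Finset.mem_filter, mem_sol] at h ⊢
    obtain ⟨⟨h1, h2, h3⟩, h4⟩ := h
    have := key u d e h1 h2 h3 h4
    rw [this, show u = d - l by lia]

lemma diag_empty {n : ℤ} (hn : ¬ IsSquare n) :
    (sol n).filter (fun p => 2 * p.1 + p.2.1 = p.2.2) = ∅ ∧
    (sol n).filter (fun p => 2 * p.1 = p.2.1 - p.2.2) = ∅ := by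
  constructor <;> refine Finset.filter_eq_empty_iff.2 ?_ <;> rintro ⟨u, d, e⟩ h h4 <;>
    simp only [mem_sol] at h h4 <;> obtain ⟨h1, h2, h3⟩ := h
  · exact hn ⟨u + d, by rw [← h3, ← h4]; ring⟩
  · exact hn ⟨d - u, by rw [← h3, show e = d - 2 * u by lia]; ring⟩

/-! ### The test function -/

open Classical in
/-- The function of `(x, y, z)` to which Liouville's identity is applied. On the solutions of
`u² + d e = n` the parities of `x` and `y + n` are functions of those of `d` and `e`; the coefficients
solve the linear system expressing `testF_pointwise`. -/
noncomputable def testF (n x y z : ℤ) : ℤ :=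
  if Odd x then
    63 * x * z ^ 4 + 97 * x * y * z ^ 3 - 672 * x * y ^ 2 * z ^ 2 + 768 * x * y ^ 3 * z
      - 224 * x * y ^ 4 + 21 * x ^ 3 * z ^ 2 - 39 * x ^ 3 * y * z
  else if Odd (y + n) then 84 * x * z ^ 4 - 112 * x * y * z ^ 3 else 0

open Classical in
/-- The weight of a factorisation `N = d e`. Only odd `e` count; the sum over these factorisations is
`7 / 16` times the predicted value of `r₈(N)`. -/
noncomputable def wt (d e : ℤ) : ℤ :=
  if Odd e then if Odd d then 7 * d ^ 3 else 8 * d ^ 3 - 15 * e ^ 3 else 0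

/-- The summand `Φ` of Liouville's identity for `testF` and `4 * wt d e * (d * e - 8 * u ^ 2)` have the
same average over `u ↦ -u` and `d ↔ e`, which preserve the solution set. -/
lemma testF_pointwise (u d e : ℤ) :
    let n := u ^ 2 + d * e
    let Φ : ℤ → ℤ → ℤ → ℤ := fun u d e =>
      2 * testF n (e - 2 * u) (u + d) (2 * u + 2 * d - e) - testF n (d + e) u (d - e)
    Φ u d e + Φ (-u) d e + Φ u e d + Φ (-u) e d =
      8 * ((wt d e + wt e d) * (d * e - 8 * u ^ 2)) := by
  intro n Φ
  simp only [n, Φ, testF, wt, Int.even_mul, Int.even_add,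
    Int.even_sub, Int.even_pow, even_neg, even_two, true_or,
    ← Int.not_even_iff_odd]
  by_cases hd : Even d <;> by_cases he : Even e <;> by_cases hu : Even u <;>
    simp [hd, he, hu] <;> ring

lemma sum_wt (n : ℤ) :
    4 * ∑ p ∈ sol n, wt p.2.1 p.2.2 * (p.2.1 * p.2.2 - 8 * p.1 ^ 2) =
      2 * ∑ p ∈ sol n with 2 * p.1 + p.2.1 = p.2.2, testF n p.2.1 (p.1 + p.2.1) p.2.1
      - ∑ p ∈ sol n with 2 * p.1 = p.2.1 - p.2.2, testF n (p.2.1 + p.2.2) p.1 (2 * p.1) := by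
  have h1 : ∀ x y z, testF n (-x) y z = -testF n x y z := by
    intro x y z
    simp only [testF, odd_neg]
    split_ifs <;> ring
  have h2 : ∀ x y z, testF n x (-y) (-z) = testF n x y z := by
    intro x y z
    simp only [testF, ← Int.not_even_iff_odd, Int.even_add, even_neg]
    split_ifs <;> ring
  have hL := liouville (n := n) h1 h2
  set Φ : ℤ × ℤ × ℤ → ℤ := fun p =>
    2 * testF n (p.2.2 - 2 * p.1) (p.1 + p.2.1) (2 * p.1 + 2 * p.2.1 - p.2.2)
      - testF n (p.2.1 + p.2.2) p.1 (p.2.1 - p.2.2) with hΦ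
  set V : ℤ × ℤ × ℤ → ℤ := fun p => wt p.2.1 p.2.2 * (p.2.1 * p.2.2 - 8 * p.1 ^ 2) with hV
  have hs : ∑ p ∈ sol n, Φ p = 4 * ∑ p ∈ sol n, V p := by
    have a1 := sum_sol_neg (n := n) Φ
    have a2 := sum_sol_swap (n := n) Φ
    have a3 := sum_sol_swap (n := n) (fun p => Φ (-p.1, p.2.1, p.2.2))
    have a4 := sum_sol_swap (n := n) V
    have a5 : ∑ p ∈ sol n, (Φ p + Φ (-p.1, p.2.1, p.2.2) + Φ (p.1, p.2.2, p.2.1)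
        + Φ (-p.1, p.2.2, p.2.1)) = ∑ p ∈ sol n, 8 * (V p + V (p.1, p.2.2, p.2.1)) := by
      refine Finset.sum_congr rfl ?_
      rintro ⟨u, d, e⟩ h
      have := (mem_sol.1 h).2.2
      have key := testF_pointwise u d e
      simp only [this] at key
      simp only [hΦ, hV]
      rw [key]
      ring
    simp only [Finset.sum_add_distrib, ← Finset.mul_sum] at a5
    simp only at a3
    lia
  have hsub : ∑ p ∈ sol n, Φ p =
      2 * ∑ p ∈ sol n, testF n (p.2.2 - 2 * p.1) (p.1 + p.2.1) (2 * p.1 + 2 * p.2.1 - p.2.2)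
      - ∑ p ∈ sol n, testF n (p.2.1 + p.2.2) p.1 (p.2.1 - p.2.2) := by
    rw [Finset.mul_sum, ← Finset.sum_sub_distrib]
  lia

lemma sum_Icc_odd (f : ℤ → ℤ) (hf : ∀ j, Even j → f j = 0) (l : ℕ) :
    ∑ j ∈ Finset.Icc 1 (2 * (l : ℤ) - 1), f j = ∑ i ∈ Finset.range l, f (2 * i + 1) := by
  symm
  refine Finset.sum_of_injOn (fun i : ℕ => 2 * (i : ℤ) + 1) ?_ ?_ ?_ ?_
  · intro a _ b _ h
    simpa using h
  · intro i hi
    simp only [Finset.coe_range, Set.mem_Iio, Finset.coe_Icc, Set.mem_Icc] at hi ⊢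
    lia
  · intro j hj hn
    apply hf
    rw [← Int.not_odd_iff_even]
    rintro ⟨i, rfl⟩
    refine hn ⟨i.toNat, ?_, ?_⟩
    · simp only [Finset.mem_Icc, Finset.coe_range, Set.mem_Iio] at hj ⊢
      lia
    · simp only [Finset.mem_Icc] at hj
      lia
  · intros; rfl

/-! ### Evaluation of the weighted sum -/

lemma sum_wt_sq {l : ℕ} (hl : 0 < l) :
    ∑ p ∈ sol ((l : ℤ) ^ 2), wt p.2.1 p.2.2 * (p.2.1 * p.2.2 - 8 * p.1 ^ 2) = 7 * (l : ℤ) ^ 2 := by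
  have h := sum_wt ((l : ℤ) ^ 2)
  rw [diag_sum_left hl, diag_sum_right hl, sum_Icc_odd, sum_Icc_odd, Finset.mul_sum (a := 2),
    ← Finset.sum_sub_distrib] at h
  · -- With `j = 2i + 1`, the first term has `x` odd; the second has `x` even and `y + n` odd.
    have e : ∀ i ∈ Finset.range l,
        2 * testF (l ^ 2) (2 * i + 1) l (2 * i + 1)
          - testF (l ^ 2) (2 * l) (2 * i + 1 - l) (2 * (2 * i + 1 - l)) =
        2 * (84 * (2 * (i : ℤ) + 1) ^ 5 + 58 * l * (2 * i + 1) ^ 4 - 672 * l ^ 2 * (2 * i + 1) ^ 3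
          + 768 * l ^ 3 * (2 * i + 1) ^ 2 - 224 * l ^ 4 * (2 * i + 1))
          - 896 * l * (2 * i + 1 - l) ^ 4 := by
      intro i _
      have p1 : Odd (2 * (i : ℤ) + 1) := ⟨i, rfl⟩
      have p2 : ¬ Odd (2 * (l : ℤ)) := by simp
      have p3 : Odd (2 * (i : ℤ) + 1 - l + l ^ 2) := by
        rw [show 2 * (i : ℤ) + 1 - l + l ^ 2 = 2 * (i : ℤ) + 1 + l * (l - 1) by ring]
        exact p1.add_even (Int.even_mul_pred_self _)
      simp only [testF, p1, p2, p3, if_true, if_false]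
      ring
    rw [Finset.sum_congr rfl e] at h
    -- The induction needs the range `N` decoupled from the parameter `L`; both are `l` in the end.
    have gen : ∀ N : ℕ, ∀ L : ℤ, ∑ i ∈ Finset.range N,
        (2 * (84 * (2 * (i : ℤ) + 1) ^ 5 + 58 * L * (2 * i + 1) ^ 4 - 672 * L ^ 2 * (2 * i + 1) ^ 3
          + 768 * L ^ 3 * (2 * i + 1) ^ 2 - 224 * L ^ 4 * (2 * i + 1))
          - 896 * L * (2 * i + 1 - L) ^ 4) =
        56 * N ^ 2 * (16 * N ^ 4 - 20 * N ^ 2 + 7) - 52 * L * N * (48 * N ^ 4 - 40 * N ^ 2 + 7)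
          + 2240 * L ^ 2 * N ^ 2 * (2 * N ^ 2 - 1) - 1280 * L ^ 3 * N * (4 * N ^ 2 - 1)
          + 3136 * L ^ 4 * N ^ 2 - 896 * L ^ 5 * N := by
      intro N L
      induction N with
      | zero => simp
      | succ N ih =>
        rw [Finset.sum_range_succ, ih]
        push_cast
        ring
    rw [gen] at h
    linarith
  · intro j hj
    have : ¬ Odd (j - l + l ^ 2 : ℤ) := by
      rw [show j - l + (l : ℤ) ^ 2 = j + l * (l - 1) by ring, Int.not_odd_iff_even]
      exact hj.add (Int.even_mul_pred_self _)
    simp [testF, this]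
  · intro j hj
    have p2 : ¬ Odd j := by simpa using hj
    have p3 : ¬ Odd (l + l ^ 2 : ℤ) := by
      rw [show (l : ℤ) + l ^ 2 = l * (l + 1) by ring, Int.not_odd_iff_even]
      exact Int.even_mul_succ_self _
    simp [testF, p2, p3]

lemma sum_wt_not_sq {n : ℤ} (hn : ¬ IsSquare n) :
    ∑ p ∈ sol n, wt p.2.1 p.2.2 * (p.2.1 * p.2.2 - 8 * p.1 ^ 2) = 0 := by
  have h := sum_wt n
  rw [(diag_empty hn).1, (diag_empty hn).2] at h
  simpa using h

/-! ### Sums of eight squares -/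

/-- `r₈` on all integers, so that `n - k²` needs no truncation. -/
noncomputable def rep8 (N : ℤ) : ℕ := Set.ncard {x : Fin 8 → ℤ | ∑ i, x i ^ 2 = N}

lemma rep8_zero : rep8 0 = 1 := by
  have : {x : Fin 8 → ℤ | ∑ i, x i ^ 2 = (0 : ℤ)} = {0} := by
    ext x
    simp only [Set.mem_ofPred_eq, Set.mem_singleton_iff]
    rw [Finset.sum_eq_zero_iff_of_nonneg (fun i _ => sq_nonneg _)]
    simp [funext_iff]
  rw [rep8, this, Set.ncard_singleton]

lemma rep8_neg {N : ℤ} (h : N < 0) : rep8 N = 0 := by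
  have : {x : Fin 8 → ℤ | ∑ i, x i ^ 2 = N} = ∅ := by
    ext x
    simp only [Set.mem_ofPred_eq, Set.mem_empty_iff_false, iff_false]
    have : 0 ≤ ∑ i, x i ^ 2 := Finset.sum_nonneg fun i _ => sq_nonneg _
    lia
  rw [rep8, this, Set.ncard_empty]

/-- Summing `n - 9 x₀²` over the `x ∈ ℤ⁹` with `∑ xᵢ² = n` gives `0`, because each coordinate
contributes equally to `∑ xᵢ²`. -/
lemma rep8_recursion (n : ℤ) :
    ∑ k ∈ Finset.Icc (-n) n, (n - 9 * k ^ 2) * (rep8 (n - k ^ 2) : ℤ) = 0 := by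
  set B : Finset (Fin 9 → ℤ) :=
    (Fintype.piFinset fun _ => Finset.Icc (-n) n).filter fun x => ∑ i, x i ^ 2 = n with hB
  have memB : ∀ x, x ∈ B ↔ ∑ i, x i ^ 2 = n := by
    intro x
    simp only [hB, Finset.mem_filter, Fintype.mem_piFinset, Finset.mem_Icc, and_iff_right_iff_imp]
    intro h i
    have : x i ^ 2 ≤ n := h ▸ Finset.single_le_sum (f := fun i => x i ^ 2)
      (fun i _ => sq_nonneg _) (Finset.mem_univ i)
    constructor <;> nlinarith [Int.le_self_sq (x i), Int.le_self_sq (-x i)]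
  -- Exchange the coordinates `0` and `i`.
  have symm : ∀ i, ∑ x ∈ B, x i ^ 2 = ∑ x ∈ B, x 0 ^ 2 := by
    intro i
    refine Finset.sum_nbij' (fun x => x ∘ Equiv.swap 0 i) (fun x => x ∘ Equiv.swap 0 i) ?_ ?_ ?_ ?_ ?_
    · intro x hx
      rw [memB] at hx ⊢
      rw [← hx]
      exact Equiv.sum_comp (Equiv.swap 0 i) (fun j => x j ^ 2)
    · intro x hx
      rw [memB] at hx ⊢
      rw [← hx]
      exact Equiv.sum_comp (Equiv.swap 0 i) (fun j => x j ^ 2)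
    · intro x _; ext j; simp
    · intro x _; ext j; simp
    · intro x _; simp
  have total : ∑ x ∈ B, (n - 9 * x 0 ^ 2) = 0 := by
    have h1 : ∑ x ∈ B, ∑ i, x i ^ 2 = ∑ x ∈ B, n := Finset.sum_congr rfl fun x hx => (memB x).1 hx
    rw [Finset.sum_comm, Finset.sum_congr rfl fun i _ => symm i] at h1
    simp only [Finset.sum_const, Finset.card_univ, Fintype.card_fin] at h1
    rw [Finset.sum_sub_distrib, ← Finset.mul_sum, Finset.sum_const, ← h1]
    simp
  rw [← total, ← Finset.sum_fiberwise_of_maps_to (s := B) (t := Finset.Icc (-n) n) (g := fun x => x 0)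
    (fun x hx => Fintype.mem_piFinset.1 (Finset.mem_filter.1 hx).1 0)]
  refine Finset.sum_congr rfl fun k _ => ?_
  have hc : rep8 (n - k ^ 2) = (B.filter fun x => x 0 = k).card := by
    rw [rep8, ← Set.ncard_coe_finset,
      ← Set.ncard_image_of_injective _ (Fin.cons_right_injective (α := fun _ : Fin 9 => ℤ) k)]
    congr 1
    ext x
    simp only [Set.mem_image, Set.mem_ofPred_eq, Finset.coe_filter, memB]
    constructor
    · rintro ⟨y, hy, rfl⟩
      rw [Fin.sum_univ_succ]
      simp [hy]
    · rintro ⟨h, rfl⟩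
      refine ⟨Fin.tail x, ?_, Fin.cons_self_tail x⟩
      rw [Fin.sum_univ_succ] at h
      simp only [Fin.tail]
      lia
  rw [hc, Finset.sum_congr rfl (g := fun _ => n - 9 * k ^ 2)
    (fun x hx => by rw [(Finset.mem_filter.1 hx).2]), Finset.sum_const, nsmul_eq_mul, mul_comm]

/-- The sum of `wt d e` over the factorisations `N = d e` in positive integers; it is `0` for `N ≤ 0`,
as `Nat.divisors 0` is empty. -/
noncomputable def wtSum (N : ℤ) : ℤ :=
  ∑ e ∈ N.toNat.divisors, wt (N / e) e

lemma wtSum_of_nonpos {N : ℤ} (h : N ≤ 0) : wtSum N = 0 := by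
  simp [wtSum, Int.toNat_of_nonpos h]

lemma sum_sol_eq (n : ℤ) :
    ∑ p ∈ sol n, wt p.2.1 p.2.2 * (p.2.1 * p.2.2 - 8 * p.1 ^ 2) =
      ∑ k ∈ Finset.Icc (-n) n, (n - 9 * k ^ 2) * wtSum (n - k ^ 2) := by
  rw [← Finset.sum_fiberwise_of_maps_to (s := sol n) (t := Finset.Icc (-n) n) (g := fun p => p.1)
    (fun p hp => (Finset.mem_product.1 (Finset.mem_filter.1 hp).1).1)]
  refine Finset.sum_congr rfl fun k _ => ?_
  rw [wtSum, Finset.mul_sum]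
  refine Finset.sum_nbij' (fun p => p.2.2.toNat) (fun e => (k, (n - k ^ 2) / e, (e : ℤ)))
    ?_ ?_ ?_ ?_ ?_
  · rintro ⟨u, d, e⟩ h
    simp only [Finset.mem_filter, mem_sol, Nat.mem_divisors] at h ⊢
    obtain ⟨⟨h1, h2, h3⟩, rfl⟩ := h
    have : 0 < d * e := mul_pos (by lia) (by lia)
    refine ⟨?_, by lia⟩
    zify
    rw [Int.toNat_of_nonneg (by lia), Int.toNat_of_nonneg (by lia)]
    exact ⟨d, by rw [← h3]; ring⟩
  · intro e h
    rw [Nat.mem_divisors] at h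
    obtain ⟨h1, h2⟩ := h
    have hpos : 0 < n - k ^ 2 := by lia
    have he : (e : ℤ) ∣ n - k ^ 2 := by
      have := Int.natCast_dvd_natCast.2 h1
      rwa [Int.toNat_of_nonneg hpos.le] at this
    obtain ⟨d, hd⟩ := he
    have he0 : 0 < (e : ℤ) := by
      rcases Nat.eq_zero_or_pos e with rfl | h
      · simp at hd; lia
      · exact_mod_cast h
    have hd0 : 0 < d := by
      rw [hd] at hpos
      exact pos_of_mul_pos_right hpos he0.le
    simp only [Finset.mem_filter, mem_sol, and_true]
    rw [hd, Int.mul_ediv_cancel_left _ he0.ne']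
    exact ⟨hd0, he0, by linarith⟩
  · rintro ⟨u, d, e⟩ h
    simp only [Finset.mem_filter, mem_sol] at h ⊢
    obtain ⟨⟨h1, h2, h3⟩, rfl⟩ := h
    rw [Int.toNat_of_nonneg (by lia), ← h3, show u ^ 2 + d * e - u ^ 2 = d * e by ring,
      Int.mul_ediv_cancel _ (by lia)]
  · intro e _; simp
  · rintro ⟨u, d, e⟩ h
    simp only [Finset.mem_filter, mem_sol] at h ⊢
    obtain ⟨⟨h1, h2, h3⟩, rfl⟩ := h
    rw [Int.toNat_of_nonneg (by lia), ← h3, show u ^ 2 + d * e - u ^ 2 = d * e by ring,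
      Int.mul_ediv_cancel _ (by lia)]
    ring

/-! ### The eight squares theorem -/

lemma rep8_eq (N : ℕ) (hN : 0 < N) : 7 * (rep8 N : ℤ) = 16 * wtSum N := by
  induction N using Nat.strong_induction_on with
  | _ N ih =>
    -- Below `N` the discrepancy `D` is nonzero only at `0`, so that in the recursion only `k = 0`
    -- (the term `N * D N`) and `k ^ 2 = N` (the term `D 0 = 7`, as `wtSum 0 = 0`) survive.
    set D : ℤ → ℤ := fun M => 7 * (rep8 M : ℤ) - 16 * wtSum M with hD
    have hD0 : D 0 = 7 := by simp [hD, rep8_zero, wtSum_of_nonpos]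
    have hDneg : ∀ M : ℤ, M < 0 → D M = 0 := fun M hM => by
      simp [hD, rep8_neg hM, wtSum_of_nonpos hM.le]
    have hDlt : ∀ M : ℤ, 0 < M → M < N → D M = 0 := fun M h1 h2 => by
      have := ih M.toNat (by lia) (by lia)
      rw [Int.toNat_of_nonneg h1.le] at this
      simp [hD, this]
    have hsum : ∑ k ∈ Finset.Icc (-(N : ℤ)) N, ((N : ℤ) - 9 * k ^ 2) * D (N - k ^ 2) =
        -16 * ∑ p ∈ sol N, wt p.2.1 p.2.2 * (p.2.1 * p.2.2 - 8 * p.1 ^ 2) := by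
      have h1 := rep8_recursion N
      rw [sum_sol_eq, Finset.mul_sum]
      rw [← sub_zero (∑ k ∈ _, _), ← mul_zero 7, ← h1, Finset.mul_sum, ← Finset.sum_sub_distrib]
      refine Finset.sum_congr rfl fun k _ => ?_
      simp only [hD]
      ring
    have hD' : ∀ k : ℤ, k ≠ 0 → k ^ 2 ≠ N → D (N - k ^ 2) = 0 := by
      intro k h0 hk
      have : 0 < k ^ 2 := by positivity
      rcases lt_or_ge ((N : ℤ) - k ^ 2) 0 with h | h
      · exact hDneg _ h
      · exact hDlt _ (by lia) (by lia)
    suffices h : D N = 0 from sub_eq_zero.1 h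
    by_cases hsq : IsSquare (N : ℤ)
    · obtain ⟨l', hl'⟩ := hsq
      obtain ⟨l, hl⟩ : ∃ l : ℕ, (N : ℤ) = (l : ℤ) ^ 2 := ⟨l'.natAbs, by rw [hl', Int.natAbs_sq, sq]⟩
      have hl0 : 0 < l := Nat.pos_of_ne_zero fun h => by simp [h] at hl; lia
      rw [hl, sum_wt_sq hl0, ← hl] at hsum
      have hsub : ({0, (l : ℤ), -(l : ℤ)} : Finset ℤ) ⊆ Finset.Icc (-(N : ℤ)) N := by
        intro k hk
        simp only [Finset.mem_insert, Finset.mem_singleton, Finset.mem_Icc] at hk ⊢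
        have : (l : ℤ) ≤ N := by rw [hl]; exact Int.le_self_sq l
        lia
      rw [← Finset.sum_subset hsub, Finset.sum_insert, Finset.sum_pair] at hsum
      · simp only [neg_sq, ← hl, sub_self, hD0] at hsum
        simp only [ne_eq, OfNat.ofNat_ne_zero, not_false_eq_true, zero_pow, mul_zero, sub_zero]
          at hsum
        have : (N : ℤ) * D N = 0 := by linarith
        exact (mul_eq_zero.1 this).resolve_left (by lia)
      · lia
      · simp only [Finset.mem_insert, Finset.mem_singleton]
        lia
      · intro k _ hk
        simp only [Finset.mem_insert, Finset.mem_singleton, not_or] at hk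
        rw [hD' k hk.1, mul_zero]
        intro h
        rw [hl] at h
        rcases sq_eq_sq_iff_eq_or_eq_neg.1 h with h | h
        · exact hk.2.1 h
        · exact hk.2.2 h
    · rw [sum_wt_not_sq hsq, mul_zero, Finset.sum_eq_single 0] at hsum
      · simpa [hN.ne'] using hsum
      · intro k _ hk
        rw [hD' k hk, mul_zero]
        exact fun h => hsq ⟨k, by rw [← h, sq]⟩
      · intro h
        simp at h

lemma wtSum_odd {m : ℕ} (hm : Odd m) : wtSum m = 7 * ∑ d ∈ m.divisors, (d : ℤ) ^ 3 := by
  rw [wtSum, Int.toNat_natCast, Finset.mul_sum,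
    ← Nat.sum_div_divisors m (fun d => 7 * (d : ℤ) ^ 3)]
  refine Finset.sum_congr rfl fun e he => ?_
  have he := Nat.dvd_of_mem_divisors he
  have h1 : Odd (e : ℤ) := (Int.odd_coe_nat e).2 (hm.of_dvd_nat he)
  have h2 : Odd ((m : ℤ) / e) := by
    exact_mod_cast (hm.of_dvd_nat (Nat.div_dvd_of_dvd he))
  simp [wt, h1, h2]

lemma wtSum_even {α m : ℕ} (hα : 1 ≤ α) (hm : Odd m) :
    wtSum ((2 ^ α * m : ℕ) : ℤ) = (2 ^ (3 * α + 3) - 15) * ∑ d ∈ m.divisors, (d : ℤ) ^ 3 := by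
  have hm0 : m ≠ 0 := hm.pos.ne'
  have hsub : m.divisors ⊆ (2 ^ α * m).divisors :=
    Nat.divisors_subset_of_dvd (by positivity) (dvd_mul_left _ _)
  rw [wtSum, Int.toNat_natCast, ← Finset.sum_subset hsub]
  · have : ∀ e ∈ m.divisors, wt (((2 ^ α * m : ℕ) : ℤ) / e) e =
        2 ^ (3 * α + 3) * (((m / e : ℕ) : ℤ) ^ 3) - 15 * (e : ℤ) ^ 3 := by
      intro e he
      have he := Nat.dvd_of_mem_divisors he
      have h1 : Odd (e : ℤ) := (Int.odd_coe_nat e).2 (hm.of_dvd_nat he)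
      have h2 : ((2 ^ α * m : ℕ) : ℤ) / e = 2 ^ α * ((m / e : ℕ) : ℤ) := by
        rw [← Int.natCast_div, Nat.mul_div_assoc _ he]
        push_cast
        ring
      have h3 : ¬ Odd ((2 : ℤ) ^ α * ((m / e : ℕ) : ℤ)) := by
        rw [Int.not_odd_iff_even]
        exact (even_two.pow_of_ne_zero (by lia)).mul_right _
      rw [h2, wt, if_pos h1, if_neg h3]
      ring
    rw [Finset.sum_congr rfl this, Finset.sum_sub_distrib, ← Finset.mul_sum, ← Finset.mul_sum,
      Nat.sum_div_divisors m (fun d => (d : ℤ) ^ 3)]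
    ring
  · -- The odd divisors of `2 ^ α * m` divide `m`, and the even ones have weight zero.
    intro e he hne
    have h1 : ¬ Odd (e : ℤ) := by
      intro h
      rw [Int.odd_coe_nat] at h
      refine hne (Nat.mem_divisors.2 ⟨?_, hm0⟩)
      exact (h.coprime_two_right.pow_right α).dvd_of_dvd_mul_left (Nat.dvd_of_mem_divisors he)
    simp [wt, h1]

theorem stmt_1 (α m : ℕ) (hm : Odd m) :
    (α = 0 → sumOfSquaresRep 8 m = 16 * ∑ d ∈ m.divisors, d ^ 3) ∧
    (1 ≤ α → (sumOfSquaresRep 8 (2 ^ α * m) : ℚ) =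
      16 * ((2 ^ (3 * α + 3) - 15) / 7) * ∑ d ∈ m.divisors, (d : ℚ) ^ 3) := by
  constructor
  · intro _
    have h := rep8_eq m hm.pos
    rw [wtSum_odd hm] at h
    have h' : (rep8 m : ℤ) = 16 * ∑ d ∈ m.divisors, (d : ℤ) ^ 3 := by linarith
    exact_mod_cast h'
  · intro hα
    have h := rep8_eq (2 ^ α * m) (Nat.mul_pos (by positivity) hm.pos)
    rw [wtSum_even hα hm] at h
    have h' := congrArg (Int.cast : ℤ → ℚ) h
    push_cast at h'
    have e : (sumOfSquaresRep 8 (2 ^ α * m) : ℚ) = (rep8 (2 ^ α * m : ℤ) : ℚ) := by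
      simp [sumOfSquaresRep, rep8]
    rw [e]
    linarith
end

section
/- For every positive integer n, r_6(n) = Σ_{d|n} d²·(−4·χ_{−1}(d) + 16·χ_{−1}(n/d)), where χ_{−1}(d) = 1 if d ≡ 1 (mod 4), −1 if d ≡ 3 (mod 4), and 0 if d is even. -/
/-- The nontrivial Dirichlet character modulo 4. -/
def chiMinusOne (d : ℕ) : ℤ :=
  if d % 4 = 1 then 1 else if d % 4 = 3 then -1 else 0

namespace SixSquares

open Finset

/-! ### The recursion for the number of representations -/

/-- The number of representations of the integer `m` (possibly negative) as a sum of six squares. -/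
noncomputable def rep (m : ℤ) : ℤ := Set.ncard {x : Fin 6 → ℤ | ∑ i, x i ^ 2 = m}

/-- The integer points `x` of the sphere `∑ xᵢ² = n` in dimension `s`, as a finite set; the bound
`|xᵢ| ≤ n` is automatic, see `mem_sphere`. -/
noncomputable def sphere (s : ℕ) (n : ℤ) : Finset (Fin s → ℤ) :=
  (Fintype.piFinset fun _ => Icc (-n) n).filter fun x => ∑ i, x i ^ 2 = n

lemma abs_le_of_sq_le {a n : ℤ} (h : a ^ 2 ≤ n) : -n ≤ a ∧ a ≤ n := by
  constructor <;> nlinarith [Int.le_self_sq a, Int.le_self_sq (-a)]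

lemma mem_sphere {s : ℕ} {n : ℤ} {x : Fin s → ℤ} : x ∈ sphere s n ↔ ∑ i, x i ^ 2 = n := by
  simp only [sphere, mem_filter, Fintype.mem_piFinset, mem_Icc, and_iff_right_iff_imp]
  intro h i
  apply abs_le_of_sq_le
  rw [← h]
  exact single_le_sum (f := fun i => x i ^ 2) (fun i _ => sq_nonneg _) (mem_univ i)

lemma rep_eq_card (m : ℤ) : rep m = #(sphere 6 m) := by
  rw [rep, ← Set.ncard_coe_finset]
  congr 2
  ext x
  simp [mem_sphere]

lemma rep_zero : rep 0 = 1 := by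
  have : sphere 6 0 = {0} := by
    ext x
    rw [mem_sphere, sum_eq_zero_iff_of_nonneg (fun i _ => sq_nonneg _), mem_singleton, funext_iff]
    simp
  simp [rep_eq_card, this]

lemma rep_neg {m : ℤ} (hm : m < 0) : rep m = 0 := by
  have : sphere 6 m = ∅ := by
    ext x
    have : 0 ≤ ∑ i, x i ^ 2 := sum_nonneg fun i _ => sq_nonneg _
    simp only [mem_sphere, notMem_empty, iff_false]
    omega
  simp [rep_eq_card, this]

/-- Slicing the seven-dimensional sphere by its first coordinate. -/
lemma sum_sphere_succ (n : ℤ) (g : ℤ → ℤ) :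
    ∑ x ∈ sphere 7 n, g (x 0) = ∑ k ∈ Icc (-n) n, g k * rep (n - k ^ 2) := by
  have hmaps : ∀ x ∈ sphere 7 n, x 0 ∈ Icc (-n) n := fun x hx =>
    Fintype.mem_piFinset.1 (mem_filter.1 hx).1 0
  rw [← sum_fiberwise_of_maps_to hmaps]
  refine sum_congr rfl fun k _ => ?_
  have h : ∑ x ∈ sphere 7 n with x 0 = k, g (x 0) = ∑ x ∈ sphere 7 n with x 0 = k, g k :=
    sum_congr rfl fun x hx => by rw [(mem_filter.1 hx).2]
  rw [h, sum_const, nsmul_eq_mul, mul_comm, rep_eq_card]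
  congr 2
  refine card_bij' (fun x _ => Fin.tail x) (fun y _ => (Fin.cons k y : Fin 7 → ℤ)) ?_ ?_ ?_ ?_
  · intro x hx
    simp only [mem_filter, mem_sphere] at hx ⊢
    rw [Fin.sum_univ_succ, hx.2] at hx
    simp only [Fin.tail]
    linarith [hx.1]
  · intro y hy
    simp only [mem_filter, mem_sphere] at hy ⊢
    rw [Fin.sum_univ_succ]
    simp [hy]
  · intro x hx
    simp only [mem_filter] at hx
    rw [← hx.2, Fin.cons_self_tail]
  · intro y hy
    simp

lemma sum_sphere_coord (n : ℤ) (i : Fin 7) :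
    ∑ x ∈ sphere 7 n, x i ^ 2 = ∑ x ∈ sphere 7 n, x 0 ^ 2 := by
  have hmem : ∀ x ∈ sphere 7 n, x ∘ Equiv.swap 0 i ∈ sphere 7 n := by
    intro x hx
    rw [mem_sphere] at hx ⊢
    rw [← hx]
    exact Equiv.sum_comp (Equiv.swap 0 i) fun j => x j ^ 2
  refine sum_bij' (fun x _ => x ∘ Equiv.swap 0 i) (fun x _ => x ∘ Equiv.swap 0 i) hmem hmem ?_ ?_ ?_
  · intro x _
    ext j
    simp
  · intro x _
    ext j
    simp
  · intro x _
    simp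

lemma recursion_rep (n : ℤ) : ∑ k ∈ Icc (-n) n, (n - 7 * k ^ 2) * rep (n - k ^ 2) = 0 := by
  rw [← sum_sphere_succ n fun k => n - 7 * k ^ 2, sum_sub_distrib]
  have h1 : ∑ x ∈ sphere 7 n, n = ∑ x ∈ sphere 7 n, ∑ i, x i ^ 2 :=
    sum_congr rfl fun x hx => (mem_sphere.1 hx).symm
  rw [h1, sum_comm]
  simp only [sum_sphere_coord, ← mul_sum]
  simp

/-! ### The character and the function `F` -/

/-- The character `χ₋₁` extended to the integers. -/
def chi (z : ℤ) : ℤ := if z % 4 = 1 then 1 else if z % 4 = 3 then -1 else 0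

/-- The sign `(-1)^y` for an integer `y`. -/
def sgn (y : ℤ) : ℤ := if y % 2 = 0 then 1 else -1

lemma chi_natCast (d : ℕ) : chi d = chiMinusOne d := by
  unfold chi chiMinusOne
  congr 1
  · simp only [eq_iff_iff]; omega
  · congr 1
    simp only [eq_iff_iff]; omega

lemma chi_neg (z : ℤ) : chi (-z) = -chi z := by
  unfold chi
  split_ifs <;> first | rfl | omega

lemma sgn_neg (y : ℤ) : sgn (-y) = sgn y := by
  unfold sgn
  split_ifs <;> first | rfl | omega

lemma chi_two_mul (y : ℤ) : chi (2 * y) = 0 := by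
  unfold chi
  split_ifs <;> first | rfl | omega

lemma chi_mul_sgn (y t : ℤ) : chi (2 * y - t) * sgn y = -chi t := by
  unfold chi sgn
  split_ifs <;> first | rfl | omega

/-- The auxiliary function of Liouville's method: odd in `x`, and odd in each of `y` and `z`. -/
def F (x y z : ℤ) : ℤ := chi z * sgn y * (x * y * (4 * y ^ 2 - x ^ 2))

lemma F_neg_x (x y z : ℤ) : F (-x) y z = -F x y z := by unfold F; ring

lemma F_neg_y (x y z : ℤ) : F x (-y) z = -F x y z := by unfold F; rw [sgn_neg]; ring

lemma F_neg_z (x y z : ℤ) : F x y (-z) = -F x y z := by unfold F; rw [chi_neg]; ring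

/-! ### Sums over the triples with `u² + dδ = n` -/

/-- The triples `(u, d, δ)` of integers with `u² + dδ = n` and `d, δ > 0`; the bounds on `u, d, δ`
are automatic, see `mem_triples`. -/
noncomputable def triples (n : ℤ) : Finset (ℤ × ℤ × ℤ) :=
  (Icc (-n) n ×ˢ Icc 1 n ×ˢ Icc 1 n).filter fun t => t.1 ^ 2 + t.2.1 * t.2.2 = n

lemma mem_triples {n u d e : ℤ} :
    (u, d, e) ∈ triples n ↔ u ^ 2 + d * e = n ∧ 0 < d ∧ 0 < e := by
  simp only [triples, mem_filter, mem_product, mem_Icc]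
  constructor
  · rintro ⟨⟨-, h1, h2⟩, h⟩
    exact ⟨h, by omega, by omega⟩
  · rintro ⟨h, hd, he⟩
    have := abs_le_of_sq_le (a := u) (n := n) (by nlinarith [mul_pos hd he])
    refine ⟨⟨this, ⟨hd, ?_⟩, ⟨he, ?_⟩⟩, h⟩ <;> nlinarith [sq_nonneg u]

lemma sum_triples_neg (n : ℤ) (g : ℤ → ℤ → ℤ → ℤ) :
    ∑ t ∈ triples n, g (-t.1) t.2.1 t.2.2 = ∑ t ∈ triples n, g t.1 t.2.1 t.2.2 := by
  have hm : ∀ t ∈ triples n, (-t.1, t.2.1, t.2.2) ∈ triples n := by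
    rintro ⟨u, d, e⟩ h
    rw [mem_triples] at h ⊢
    simpa using h
  exact sum_bij' (fun t _ => (-t.1, t.2.1, t.2.2)) (fun t _ => (-t.1, t.2.1, t.2.2)) hm hm
    (fun _ _ => by simp) (fun _ _ => by simp) (fun _ _ => rfl)

lemma sum_triples_swap (n : ℤ) (g : ℤ → ℤ → ℤ → ℤ) :
    ∑ t ∈ triples n, g t.1 t.2.2 t.2.1 = ∑ t ∈ triples n, g t.1 t.2.1 t.2.2 := by
  have hm : ∀ t ∈ triples n, (t.1, t.2.2, t.2.1) ∈ triples n := by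
    rintro ⟨u, d, e⟩ h
    rw [mem_triples] at h ⊢
    exact ⟨by linarith [h.1], h.2.2, h.2.1⟩
  exact sum_bij' (fun t _ => (t.1, t.2.2, t.2.1)) (fun t _ => (t.1, t.2.2, t.2.1)) hm hm
    (fun _ _ => rfl) (fun _ _ => rfl) (fun _ _ => rfl)

/-- The summand `F(δ - 2u, u + d, 2u + 2d - δ)` attached to a triple `(u, d, δ)`. -/
def H (t : ℤ × ℤ × ℤ) : ℤ := F (t.2.2 - 2 * t.1) (t.1 + t.2.1) (2 * t.1 + 2 * t.2.1 - t.2.2)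

lemma sum_pos (n : ℤ) : ∑ t ∈ triples n with 0 < 2 * t.1 + t.2.1 - t.2.2, H t = 0 := by
  let φ : ℤ × ℤ × ℤ → ℤ × ℤ × ℤ := fun t => (t.2.2 - t.1, 2 * t.1 + t.2.1 - t.2.2, t.2.2)
  set A := {t ∈ triples n | 0 < 2 * t.1 + t.2.1 - t.2.2} with hA
  have hm : ∀ t ∈ A, φ t ∈ A := by
    rintro ⟨u, d, e⟩ h
    simp only [hA, φ, mem_filter, mem_triples] at h ⊢
    refine ⟨⟨?_, h.2, h.1.2.2⟩, by linarith [h.1.2.1]⟩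
    rw [← h.1.1]
    ring
  have hφ : ∀ t, φ (φ t) = t := by
    rintro ⟨u, d, e⟩
    simp only [φ, Prod.mk.injEq]
    refine ⟨by ring, by ring, trivial⟩
  have hH : ∀ t, H (φ t) = -H t := by
    rintro ⟨u, d, e⟩
    simp only [φ, H]
    rw [← F_neg_x]
    congr 1 <;> ring
  have : ∑ t ∈ A, H t = ∑ t ∈ A, -H t :=
    sum_bij' (fun t _ => φ t) (fun t _ => φ t) hm hm (fun t _ => hφ t) (fun t _ => hφ t)
      (fun t _ => by rw [hH, neg_neg])
  rw [sum_neg_distrib] at this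
  omega

/-- The half sum of `F(d + δ, u, d - δ)` vanishes: it equals the opposite half sum, since `F` is even
in `(y, z)`, while the full sum is `0`, since `F` is odd in `z`; on the wall between the two halves
`z = 2u` is even. -/
lemma sum_half (n : ℤ) :
    ∑ t ∈ triples n with 0 < t.2.2 + 2 * t.1 - t.2.1, F (t.2.1 + t.2.2) t.1 (t.2.1 - t.2.2) = 0 := by
  let G : ℤ × ℤ × ℤ → ℤ := fun t => F (t.2.1 + t.2.2) t.1 (t.2.1 - t.2.2)
  have htot : ∑ t ∈ triples n, G t = 0 := by
    have h := sum_triples_swap n fun u d e => F (d + e) u (d - e)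
    have h2 : ∑ t ∈ triples n, F (t.2.2 + t.2.1) t.1 (t.2.2 - t.2.1) = ∑ t ∈ triples n, -G t := by
      refine sum_congr rfl fun t _ => ?_
      simp only [G]
      rw [← F_neg_z]
      congr 1 <;> ring
    rw [h2, sum_neg_distrib] at h
    simp only [G] at h ⊢
    omega
  have hflip : ∑ t ∈ triples n with 0 < t.2.2 + 2 * t.1 - t.2.1, G t =
      ∑ t ∈ triples n with t.2.2 + 2 * t.1 - t.2.1 < 0, G t := by
    refine sum_bij' (fun t _ => (-t.1, t.2.2, t.2.1)) (fun t _ => (-t.1, t.2.2, t.2.1))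
      ?_ ?_ (fun _ _ => by simp) (fun _ _ => by simp) ?_
    · rintro ⟨u, d, e⟩ h
      simp only [mem_filter, mem_triples] at h ⊢
      exact ⟨⟨by linarith [h.1.1], h.1.2.2, h.1.2.1⟩, by linarith [h.2]⟩
    · rintro ⟨u, d, e⟩ h
      simp only [mem_filter, mem_triples] at h ⊢
      exact ⟨⟨by linarith [h.1.1], h.1.2.2, h.1.2.1⟩, by linarith [h.2]⟩
    · rintro ⟨u, d, e⟩ h
      simp only [G]
      rw [F_neg_y, ← F_neg_z]
      congr 1 <;> ring
  have hzero : ∑ t ∈ triples n with t.2.2 + 2 * t.1 - t.2.1 = 0, G t = 0 := by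
    refine sum_eq_zero fun t ht => ?_
    have h : t.2.1 - t.2.2 = 2 * t.1 := by
      have := (mem_filter.1 ht).2
      omega
    simp only [G, F]
    rw [h, chi_two_mul]
    ring
  have hsplit : ∑ t ∈ triples n, G t =
      ∑ t ∈ triples n with 0 < t.2.2 + 2 * t.1 - t.2.1, G t +
      (∑ t ∈ triples n with t.2.2 + 2 * t.1 - t.2.1 < 0, G t +
      ∑ t ∈ triples n with t.2.2 + 2 * t.1 - t.2.1 = 0, G t) := by
    simp only [sum_filter, ← sum_add_distrib]
    refine sum_congr rfl fun t _ => ?_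
    split_ifs <;> omega
  change ∑ t ∈ triples n with 0 < t.2.2 + 2 * t.1 - t.2.1, G t = 0
  omega

lemma sum_neg (n : ℤ) : ∑ t ∈ triples n with 2 * t.1 + t.2.1 - t.2.2 < 0, H t = 0 := by
  refine Eq.trans ?_ (sum_half n)
  refine sum_bij' (fun t _ => (t.1 + t.2.1, t.2.1, t.2.2 - 2 * t.1 - t.2.1))
    (fun t _ => (t.1 - t.2.1, t.2.1, t.2.2 + 2 * t.1 - t.2.1)) ?_ ?_ ?_ ?_ ?_
  · rintro ⟨u, d, e⟩ h
    simp only [mem_filter, mem_triples] at h ⊢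
    refine ⟨⟨?_, h.1.2.1, by linarith [h.2]⟩, by linarith [h.1.2.2]⟩
    rw [← h.1.1]
    ring
  · rintro ⟨u, d, e⟩ h
    simp only [mem_filter, mem_triples] at h ⊢
    refine ⟨⟨?_, h.1.2.1, by linarith [h.2]⟩, by linarith [h.1.2.2]⟩
    rw [← h.1.1]
    ring
  · rintro ⟨u, d, e⟩ _
    simp only [Prod.mk.injEq]
    refine ⟨by ring, trivial, by ring⟩
  · rintro ⟨u, d, e⟩ _
    simp only [Prod.mk.injEq]
    refine ⟨by ring, trivial, by ring⟩
  · rintro ⟨u, d, e⟩ _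
    simp only [H]
    congr 1 <;> ring

lemma sum_H (n : ℤ) :
    ∑ t ∈ triples n, H t = ∑ t ∈ triples n with 2 * t.1 + t.2.1 - t.2.2 = 0, H t := by
  have hsplit : ∑ t ∈ triples n, H t =
      ∑ t ∈ triples n with 0 < 2 * t.1 + t.2.1 - t.2.2, H t +
      (∑ t ∈ triples n with 2 * t.1 + t.2.1 - t.2.2 < 0, H t +
      ∑ t ∈ triples n with 2 * t.1 + t.2.1 - t.2.2 = 0, H t) := by
    simp only [sum_filter, ← sum_add_distrib]
    refine sum_congr rfl fun t _ => ?_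
    split_ifs <;> omega
  rw [hsplit, sum_pos, sum_neg, zero_add, zero_add]

/-! ### The boundary term -/

lemma alternating_sums (l : ℕ) :
    ∑ j ∈ range (2 * l), chi j * j = -sgn l * l ∧
    ∑ j ∈ range (2 * l), chi j * (j : ℤ) ^ 3 = -sgn l * (4 * (l : ℤ) ^ 3 - 3 * l) := by
  induction l with
  | zero => simp
  | succ l ih =>
    have h1 : chi ((2 * l : ℕ) : ℤ) = 0 := by push_cast; exact chi_two_mul _
    have h2 : chi ((2 * l + 1 : ℕ) : ℤ) = sgn l := by
      unfold chi sgn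
      push_cast
      split_ifs <;> first | rfl | omega
    have h3 : sgn ((l + 1 : ℕ) : ℤ) = -sgn l := by
      unfold sgn
      push_cast
      split_ifs <;> first | rfl | omega
    rw [show 2 * (l + 1) = 2 * l + 1 + 1 by ring]
    simp only [sum_range_succ]
    rw [ih.1, ih.2, h1, h2, h3]
    push_cast
    constructor <;> ring

lemma sgn_mul_self (y : ℤ) : sgn y * sgn y = 1 := by
  unfold sgn
  split_ifs <;> rfl

lemma boundary_square (l : ℕ) :
    ∑ t ∈ triples ((l : ℤ) ^ 2) with 2 * t.1 + t.2.1 - t.2.2 = 0, H t = -3 * (l : ℤ) ^ 2 := by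
  have key : ∑ t ∈ triples ((l : ℤ) ^ 2) with 2 * t.1 + t.2.1 - t.2.2 = 0, H t =
      ∑ j ∈ range (2 * l) with 0 < j, F j l j := by
    -- `u + d = ±ℓ`, and the sign is `+` because `2(u + d) = d + δ > 0`
    have hy : ∀ {u d e : ℤ}, u ^ 2 + d * e = (l : ℤ) ^ 2 → 0 < d → 0 < e → 2 * u + d - e = 0 →
        u + d = l := by
      intro u d e h hd he h0
      obtain rfl : e = 2 * u + d := by omega
      have : (u + d) ^ 2 = (l : ℤ) ^ 2 := by rw [← h]; ring
      rcases sq_eq_sq_iff_eq_or_eq_neg.1 this with h | h <;> omega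
    refine sum_bij' (fun t _ => t.2.1.toNat) (fun j _ => ((l : ℤ) - j, (j : ℤ), 2 * (l : ℤ) - j))
      ?_ ?_ ?_ ?_ ?_
    · rintro ⟨u, d, e⟩ h
      simp only [mem_filter, mem_triples, mem_range] at h ⊢
      have := hy h.1.1 h.1.2.1 h.1.2.2 h.2
      omega
    · intro j h
      simp only [mem_filter, mem_triples, mem_range] at h ⊢
      refine ⟨⟨by ring, by omega, by omega⟩, by ring⟩
    · rintro ⟨u, d, e⟩ h
      simp only [mem_filter, mem_triples] at h
      have := hy h.1.1 h.1.2.1 h.1.2.2 h.2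
      simp only [Prod.mk.injEq]
      omega
    · intro j _
      simp
    · rintro ⟨u, d, e⟩ h
      simp only [mem_filter, mem_triples] at h
      have := hy h.1.1 h.1.2.1 h.1.2.2 h.2
      simp only [H]
      congr 1 <;> omega
  have h2 : ∑ j ∈ range (2 * l) with 0 < j, F j l j = ∑ j ∈ range (2 * l), F j l j := by
    rw [sum_filter]
    refine sum_congr rfl fun j _ => ?_
    split_ifs with h
    · rfl
    · obtain rfl : j = 0 := by omega
      simp [F]
  have h3 : ∑ j ∈ range (2 * l), F j l j = sgn l * l *
      (4 * (l : ℤ) ^ 2 * ∑ j ∈ range (2 * l), chi j * j -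
        ∑ j ∈ range (2 * l), chi j * (j : ℤ) ^ 3) := by
    rw [mul_sum, ← sum_sub_distrib, mul_sum]
    refine sum_congr rfl fun j _ => ?_
    unfold F
    ring
  rw [key, h2, h3, (alternating_sums l).1, (alternating_sums l).2]
  linear_combination (-3 * (l : ℤ) ^ 2) * sgn_mul_self l

lemma boundary_nonsquare {n : ℤ} (hn : ∀ k : ℤ, k ^ 2 ≠ n) :
    ∑ t ∈ triples n with 2 * t.1 + t.2.1 - t.2.2 = 0, H t = 0 := by
  refine sum_eq_zero ?_
  rintro ⟨u, d, e⟩ h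
  simp only [mem_filter, mem_triples] at h
  obtain rfl : e = 2 * u + d := by linarith [h.2]
  exact absurd (by rw [← h.1.1]; ring) (hn (u + d))

/-! ### The recursion for the divisor sum -/

/-- Averaging `H` over `u ↦ -u` leaves `-χ(δ)` times a polynomial even in `u`. -/
lemma sum_H_eq (n : ℤ) : ∑ t ∈ triples n, H t =
    -∑ t ∈ triples n,
      chi t.2.2 * ((t.2.1 * t.2.2 - 6 * t.1 ^ 2) * (4 * t.2.1 ^ 2 - t.2.2 ^ 2)) := by
  let g : ℤ → ℤ → ℤ → ℤ := fun u d e =>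
    -chi e * ((e - 2 * u) * (u + d) * (4 * (u + d) ^ 2 - (e - 2 * u) ^ 2))
  have h1 : ∑ t ∈ triples n, H t = ∑ t ∈ triples n, g t.1 t.2.1 t.2.2 := by
    refine sum_congr rfl fun t _ => ?_
    simp only [H, F, g]
    rw [← chi_mul_sgn (t.1 + t.2.1) t.2.2, mul_add 2 t.1 t.2.1]
  have h2 := sum_triples_neg n g
  have h3 : ∑ t ∈ triples n, g (-t.1) t.2.1 t.2.2 + ∑ t ∈ triples n, g t.1 t.2.1 t.2.2 =
      -2 * ∑ t ∈ triples n,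
        chi t.2.2 * ((t.2.1 * t.2.2 - 6 * t.1 ^ 2) * (4 * t.2.1 ^ 2 - t.2.2 ^ 2)) := by
    rw [← sum_add_distrib, mul_sum]
    refine sum_congr rfl fun t _ => ?_
    simp only [g]
    ring
  rw [h1]
  omega

/-- The right-hand side of the theorem, summed over factorizations `m = d δ`, with the additional
value `1` at `m = 0`. For `m ≤ 0` the sum is empty since `m.toNat = 0`. -/
def divisorSide (m : ℤ) : ℤ :=
  (if m = 0 then 1 else 0) +
    ∑ p ∈ m.toNat.divisorsAntidiagonal, (p.1 : ℤ) ^ 2 * (-4 * chi p.1 + 16 * chi p.2)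

lemma sum_triples_eq (n : ℤ) (g : ℤ → ℤ → ℤ → ℤ) :
    ∑ k ∈ Icc (-n) n, ∑ p ∈ (n - k ^ 2).toNat.divisorsAntidiagonal, g k p.1 p.2 =
      ∑ t ∈ triples n, g t.1 t.2.1 t.2.2 := by
  rw [sum_sigma']
  refine sum_bij' (fun a _ => (a.1, (a.2.1 : ℤ), (a.2.2 : ℤ)))
    (fun t _ => ⟨t.1, (t.2.1.toNat, t.2.2.toNat)⟩) ?_ ?_ ?_ ?_ ?_
  · rintro ⟨k, d, e⟩ h
    simp only [mem_sigma, Nat.mem_divisorsAntidiagonal, mem_triples] at h ⊢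
    obtain ⟨-, h, h0⟩ := h
    have hd : d ≠ 0 := by rintro rfl; simp at h; omega
    have he : e ≠ 0 := by rintro rfl; simp at h; omega
    have : ((d * e : ℕ) : ℤ) = n - k ^ 2 := by omega
    push_cast at this
    refine ⟨by linarith, by omega, by omega⟩
  · rintro ⟨u, d, e⟩ h
    have hb := (mem_product.1 (mem_filter.1 h).1).1
    rw [mem_triples] at h
    obtain ⟨h, hd, he⟩ := h
    simp only [mem_sigma, Nat.mem_divisorsAntidiagonal]
    have hde := mul_pos hd he
    refine ⟨hb, ?_, by omega⟩
    rw [← Int.toNat_mul hd.le he.le]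
    congr 1
    linarith
  · rintro ⟨k, d, e⟩ _
    simp
  · rintro ⟨u, d, e⟩ h
    rw [mem_triples] at h
    simp [h.2.1.le, h.2.2.le]
  · rintro ⟨k, d, e⟩ _
    rfl

lemma sum_weight (n : ℤ) :
    ∑ t ∈ triples n, (n - 7 * t.1 ^ 2) * (t.2.1 ^ 2 * (-4 * chi t.2.1 + 16 * chi t.2.2)) =
      -4 * ∑ t ∈ triples n with 2 * t.1 + t.2.1 - t.2.2 = 0, H t := by
  rw [← sum_H, sum_H_eq]
  have hswap := sum_triples_swap n fun u d e => chi d * ((d * e - 6 * u ^ 2) * d ^ 2)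
  have h1 : ∑ t ∈ triples n,
      (n - 7 * t.1 ^ 2) * (t.2.1 ^ 2 * (-4 * chi t.2.1 + 16 * chi t.2.2)) =
      ∑ t ∈ triples n, chi t.2.2 * ((t.2.1 * t.2.2 - 6 * t.1 ^ 2) * (16 * t.2.1 ^ 2)) -
      4 * ∑ t ∈ triples n, chi t.2.1 * ((t.2.1 * t.2.2 - 6 * t.1 ^ 2) * t.2.1 ^ 2) := by
    rw [mul_sum, ← sum_sub_distrib]
    refine sum_congr rfl ?_
    rintro ⟨u, d, e⟩ h
    rw [mem_triples] at h
    rw [← h.1]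
    ring
  rw [h1, ← hswap, mul_neg, neg_mul, neg_neg, mul_sum, mul_sum, ← sum_sub_distrib]
  refine sum_congr rfl fun t _ => ?_
  ring

lemma recursion_divisorSide {n : ℤ} (hn : 0 < n) :
    ∑ k ∈ Icc (-n) n, (n - 7 * k ^ 2) * divisorSide (n - k ^ 2) = 0 := by
  simp only [divisorSide, mul_add, sum_add_distrib]
  have h := sum_triples_eq n fun k d e => (n - 7 * k ^ 2) * (d ^ 2 * (-4 * chi d + 16 * chi e))
  rw [sum_weight] at h
  simp only [mul_add, sum_add_distrib, mul_sum] at h ⊢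
  rw [h]
  by_cases hsq : ∃ k : ℤ, k ^ 2 = n
  · obtain ⟨k, rfl⟩ := hsq
    obtain ⟨l, hl⟩ : ∃ l : ℕ, k ^ 2 = (l : ℤ) ^ 2 := ⟨k.natAbs, by simp⟩
    rw [hl] at hn ⊢
    have hl0 : (l : ℤ) ≠ 0 := by rintro h; simp [h] at hn
    rw [← mul_sum, boundary_square]
    have hset : {k ∈ Icc (-(l : ℤ) ^ 2) ((l : ℤ) ^ 2) | (l : ℤ) ^ 2 - k ^ 2 = 0} =
        {(l : ℤ), -(l : ℤ)} := by
      ext k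
      simp only [mem_filter, mem_Icc, mem_insert, mem_singleton]
      constructor
      · rintro ⟨-, h⟩
        exact sq_eq_sq_iff_eq_or_eq_neg.1 (by linarith)
      · intro h
        have hk : k ^ 2 = (l : ℤ) ^ 2 := sq_eq_sq_iff_eq_or_eq_neg.2 h
        exact ⟨abs_le_of_sq_le hk.le, by linarith⟩
    simp only [mul_ite, mul_one, mul_zero]
    rw [← sum_filter, hset, sum_pair (by omega)]
    ring
  · push Not at hsq
    rw [← mul_sum, boundary_nonsquare hsq, mul_zero, add_zero]
    refine sum_eq_zero fun k _ => ?_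
    rw [if_neg fun h => hsq k (by linarith), mul_zero]

/-- The recursion determines the value at `n` from those at `n - k²` with `k ≠ 0`. -/
lemma rep_eq_divisorSide (n : ℕ) : rep n = divisorSide n := by
  induction n using Nat.strong_induction_on with
  | _ n ih =>
    rcases Nat.eq_zero_or_pos n with rfl | hn
    · simp [rep_zero, divisorSide]
    have hn' : (0 : ℤ) < n := by exact_mod_cast hn
    have h : ∑ k ∈ Icc (-(n : ℤ)) n,
        (n - 7 * k ^ 2) * (rep (n - k ^ 2) - divisorSide (n - k ^ 2)) = 0 := by
      simp only [mul_sub _ (rep _), sum_sub_distrib]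
      rw [recursion_rep, recursion_divisorSide hn', sub_zero]
    rw [sum_eq_single_of_mem 0 (by simp)] at h
    · simp only [ne_eq, OfNat.ofNat_ne_zero, not_false_eq_true, zero_pow, mul_zero, sub_zero,
        mul_eq_zero] at h
      omega
    · intro k _ hk
      have hk2 : 0 < k ^ 2 := by positivity
      rcases lt_or_ge ((n : ℤ) - k ^ 2) 0 with hneg | hpos
      · have : divisorSide ((n : ℤ) - k ^ 2) = 0 := by
          simp [divisorSide, hneg.ne, Int.toNat_of_nonpos hneg.le]
        rw [rep_neg hneg, this]
        ring
      · obtain ⟨m, hm⟩ := Int.eq_ofNat_of_zero_le hpos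
        rw [hm, ih m (by omega)]
        ring

end SixSquares

theorem stmt_6 (n : ℕ) (hn : 0 < n) :
    (sumOfSquaresRep 6 n : ℤ) =
      ∑ d ∈ n.divisors, (d : ℤ) ^ 2 * (-4 * chiMinusOne d + 16 * chiMinusOne (n / d)) := by
  have h := SixSquares.rep_eq_divisorSide n
  rw [SixSquares.divisorSide, if_neg (by omega), zero_add, Int.toNat_natCast] at h
  simp only [SixSquares.chi_natCast] at h
  rw [Nat.sum_divisorsAntidiagonal
    fun d e => (d : ℤ) ^ 2 * (-4 * chiMinusOne d + 16 * chiMinusOne e)] at h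
  exact h
end

section
/- Let η(z) = q^{1/24}·∏_{n≥1}(1 − q^n) with q = e^{2πiz}, and let F(z) = η(4z)^8/η(2z)^4. Then F(z) = Σ_{n odd, n ≥ 1} σ_1(n)·q^n, where σ_1(n) is the sum of divisors of n. -/
/-!
The proof shows that a modular function of weight zero without poles is constant, using only modular
forms of level one.

Put `w = 2z` and `x = e^{πiw} = q`. Since `E₂(z) = 1 - 24 ∑ σ₁(n) q^n`, the odd part of `∑ σ₁(n) q^n`
is, up to a constant, `E₂((w + 1) / 2) - E₂(w / 2)`. So the claim is that `quotA w`, the quotient of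
this difference by `η(2w)^8 / η(w)^4`, up to normalisation, is the constant `3 / 2`.

The quotient `quotA` is invariant under a subgroup of index three of `SL₂(ℤ)`, and it has two further
conjugates `quotB` and `quotC`. The transformation `T` fixes `quotA` and exchanges `quotB` and
`quotC` (`quotA_add_one`, `quotB_add_one`, `quotC_add_one`), which is visible on the expansions in
`x`. The transformation `S` exchanges `quotA` and `quotB` and fixes `quotC` (`quotA_neg_one_div`,
`quotB_neg_one_div`, `quotC_neg_one_div`): the anomalies of the quasimodular form `E₂` cancel in the
differences, and the square roots in the transformation law of `η` disappear in `η ^ 4`. All three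
quotients are holomorphic, because `η` has no zeros, and all three tend to `3 / 2` at `i∞`.

Hence the product of the three functions `quot_ - 3 / 2` is a cusp form of weight zero and level one,
and there are none but zero (`quotProd_eq_zero`). By the identity theorem one of the factors vanishes
identically, and then `S` and `T` make `quotA - 3 / 2` vanish (`quotA_eq_const`). Substituting the
expansions gives the identity.
-/

open Real Complex

/-- The Dedekind eta function `η(z) = q^{1/24} ∏_{n ≥ 1} (1 - q^n)`, `q = e^{2πiz}`. -/
noncomputable def dedekindEta (z : ℂ) : ℂ :=
  Complex.exp (Real.pi * Complex.I * z / 12) *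
    ∏' n : ℕ, (1 - Complex.exp (2 * Real.pi * Complex.I * ((n : ℂ) + 1) * z))

section Helpers

open UpperHalfPlane hiding I
open ModularForm EisensteinSeries Filter Topology ArithmeticFunction.sigma MatrixGroups

/-! ### The series `E₂` and the product `η ^ 4` -/

/-- The weight two Eisenstein series `E₂`, as a function of a complex variable. It is `E₂` on the
upper half-plane and has a junk value elsewhere. -/
noncomputable def eisTwo (z : ℂ) : ℂ := E2 (ofComplex z)

/-- The fourth power of Mathlib's eta function. -/
noncomputable def etaFour (z : ℂ) : ℂ := ModularForm.eta z ^ 4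

/-- Euler's product `∏ (1 - x ^ n)` over `n ≥ 1`. -/
noncomputable def eulerProd (x : ℂ) : ℂ := ∏' n : ℕ, (1 - x ^ (n + 1))

/-- The power series `∑ σ₁(n + 1) x ^ n` over `n ≥ 0`. -/
noncomputable def sigmaSeries (x : ℂ) : ℂ := ∑' n : ℕ, (σ 1 (n + 1) : ℂ) * x ^ n

/-- The quasimodular transformation law of `E₂` under `S`. -/
lemma eisTwo_neg_one_div {z : ℂ} (hz : 0 < z.im) :
    eisTwo (-1 / z) = z ^ 2 * eisTwo z + 6 / (π * Complex.I) * z := by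
  obtain ⟨τ, rfl⟩ : ∃ τ : ℍ, (τ : ℂ) = z := ⟨⟨z, hz⟩, rfl⟩
  have h := congrFun (E2_slash_action ModularGroup.S) τ
  have hz0 : (τ : ℂ) ≠ 0 := τ.ne_zero
  simp only [SL_slash_def, modular_S_smul, ModularGroup.denom_S, Pi.sub_apply, Pi.smul_apply,
    smul_eq_mul, riemannZeta_two, D2_S, zpow_neg, zpow_ofNat] at h
  have e1 : eisTwo (-1 / τ) = E2 (.mk (-(τ : ℂ))⁻¹ τ.im_inv_neg_coe_pos) := by
    rw [eisTwo, show -1 / (τ : ℂ) = (-(τ : ℂ))⁻¹ by rw [inv_neg, neg_div, one_div],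
      ofComplex_apply_of_im_pos τ.im_inv_neg_coe_pos]
  have hpi : (π : ℂ) ≠ 0 := by exact_mod_cast Real.pi_ne_zero
  rw [e1, eisTwo, ofComplex_apply]
  rw [← div_eq_mul_inv, div_eq_iff (pow_ne_zero 2 hz0)] at h
  rw [h]
  field_simp
  ring_nf
  simp [Complex.I_sq]
  ring

lemma etaFour_neg_one_div {z : ℂ} (hz : 0 < z.im) :
    etaFour (-1 / z) = -(z ^ 2 * etaFour z) := by
  have h := eta_comp_eq_csqrt_I_inv hz
  -- the square roots in the transformation law of `η` disappear in the fourth power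
  have hs : ∀ w : ℂ, w ≠ 0 → Complex.sqrt w ^ 4 = w ^ 2 := by
    intro w hw
    rw [sqrt_eq_exp hw, ← Complex.exp_nat_mul]
    rw [show ((4 : ℕ) : ℂ) * (Complex.log w / 2) = (2 : ℕ) * Complex.log w by push_cast; ring,
      Complex.exp_nat_mul, Complex.exp_log hw]
  have hz0 : z ≠ 0 := by rintro rfl; simp at hz
  simp only [Function.comp_apply, Pi.smul_apply, Pi.mul_apply, smul_eq_mul] at h
  rw [etaFour, h, mul_pow, mul_pow, inv_pow, hs _ Complex.I_ne_zero, hs _ hz0, Complex.I_sq,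
    etaFour]
  norm_num

lemma etaFour_eq (z : ℂ) :
    etaFour z =
      Complex.exp (π * Complex.I * z / 3) * eulerProd (Complex.exp (2 * π * Complex.I * z)) ^ 4 := by
  rw [etaFour, ModularForm.eta, mul_pow]
  congr 1
  · rw [Function.Periodic.qParam, ← Complex.exp_nat_mul]
    congr 1
    push_cast
    ring
  · simp only [eulerProd, eta_q_eq_pow]

lemma etaFour_ne_zero {z : ℂ} (hz : 0 < z.im) : etaFour z ≠ 0 := pow_ne_zero 4 (eta_ne_zero hz)

lemma summable_sigma {x : ℝ} (h0 : 0 ≤ x) (hx : x < 1) :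
    Summable fun n : ℕ ↦ (σ 1 (n + 1) : ℝ) * x ^ n := by
  have h1 : Summable fun n : ℕ ↦ (n + 1 : ℝ) ^ 2 * x ^ n := by
    have hn : ‖x‖ < 1 := by rwa [Real.norm_of_nonneg h0]
    have h2 := summable_pow_mul_geometric_of_norm_lt_one 2 hn
    have h3 := summable_pow_mul_geometric_of_norm_lt_one 1 hn
    have h4 := summable_pow_mul_geometric_of_norm_lt_one 0 hn
    refine ((h2.add (h3.mul_left 2)).add h4).congr fun n ↦ ?_
    ring
  refine Summable.of_nonneg_of_le (fun n ↦ by positivity) (fun n ↦ ?_) h1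
  gcongr
  have := ArithmeticFunction.sigma_le_pow_succ 1 (n + 1)
  exact_mod_cast this

lemma hasSum_sigmaSeries {x : ℂ} (hx : ‖x‖ < 1) :
    HasSum (fun n : ℕ ↦ (σ 1 (n + 1) : ℂ) * x ^ n) (sigmaSeries x) := by
  refine Summable.hasSum (Summable.of_norm ?_)
  simpa using summable_sigma (norm_nonneg x) hx

lemma tendsto_sigmaSeries : Tendsto sigmaSeries (𝓝 0) (𝓝 1) := by
  have h := tendsto_tsum_of_dominated_convergence (𝓕 := 𝓝 (0 : ℂ))
    (f := fun (x : ℂ) (n : ℕ) ↦ (σ 1 (n + 1) : ℂ) * x ^ n)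
    (g := fun n ↦ (σ 1 (n + 1) : ℂ) * 0 ^ n)
    (summable_sigma (x := 1 / 2) (by norm_num) (by norm_num))
    (fun n ↦ by
      have hc : Continuous fun x : ℂ ↦ (σ 1 (n + 1) : ℂ) * x ^ n := by fun_prop
      exact hc.tendsto 0) (by
      filter_upwards [Metric.ball_mem_nhds (0 : ℂ) (by norm_num : (0 : ℝ) < 1 / 2)] with x hx n
      rw [norm_mul, norm_pow, Complex.norm_natCast]
      gcongr
      exact (mem_ball_zero_iff.mp hx).le)
  have h0 : ∑' n : ℕ, (σ 1 (n + 1) : ℂ) * 0 ^ n = 1 := by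
    rw [tsum_eq_single 0 (fun n hn ↦ by simp [hn])]
    simp
  rw [h0] at h
  exact h

lemma tendsto_eulerProd : Tendsto eulerProd (𝓝 0) (𝓝 1) := by
  have h : ContinuousAt eulerProd 0 := differentiableOn_tprod_one_sub_pow.continuousOn.continuousAt
    (Metric.ball_mem_nhds (0 : ℂ) one_pos)
  have h0 : eulerProd 0 = 1 := by simp [eulerProd]
  rw [← h0]
  exact h.tendsto

lemma eisTwo_eq {z : ℂ} (hz : 0 < z.im) {x : ℂ} (hx : x = Complex.exp (2 * π * Complex.I * z)) :
    eisTwo z = 1 - 24 * (x * sigmaSeries x) := by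
  rw [eisTwo, ofComplex_apply_of_im_pos hz, E2_eq_tsum_cexp]
  simp only [← hx]
  rw [tsum_pnat_eq_tsum_succ (f := fun n ↦ (σ 1 n : ℂ) * x ^ n), sigmaSeries]
  have hx' (n : ℕ) : (σ 1 (n + 1) : ℂ) * x ^ (n + 1) = x * ((σ 1 (n + 1) : ℂ) * x ^ n) := by ring
  simp only [hx', tsum_mul_left]

/-! ### Three quotients permuted by the modular group -/

/-- The difference of `E₂` at `(w + 1) / 2` and `w / 2`, divided by the fourth power of the theta
constant `2 η(2w) ^ 2 / η(w)`, up to the factor `2`. The transformation `T` fixes it, and `S`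
exchanges it with `quotB`. -/
noncomputable def quotA (w : ℂ) : ℂ :=
  (eisTwo ((w + 1) / 2) - eisTwo (w / 2)) / 2 * etaFour w / (16 * etaFour (2 * w) ^ 2)

/-- The image of `quotA` under `S`: the same construction at `2 w` and `(w + 1) / 2`, with the
theta constant `η(w / 2) ^ 2 / η(w)`. -/
noncomputable def quotB (w : ℂ) : ℂ :=
  (2 * eisTwo (2 * w) - eisTwo ((w + 1) / 2) / 2) * etaFour w / etaFour (w / 2) ^ 2

/-- The image of `quotB` under `T`: the same construction at `2 w` and `w / 2`, with the theta
constant built from `η((w + 1) / 2)`. The root of unity comes from `η(w + 1) ^ 4`. -/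
noncomputable def quotC (w : ℂ) : ℂ :=
  (2 * eisTwo (2 * w) - eisTwo (w / 2) / 2) * (Complex.exp (π * Complex.I / 3) * etaFour w) /
    etaFour ((w + 1) / 2) ^ 2

/-- The expansion of `quotA` as a function of `x = e^{πiw}`. -/
noncomputable def expA (x : ℂ) : ℂ :=
  3 / 4 * (sigmaSeries x + sigmaSeries (-x)) * eulerProd (x ^ 2) ^ 4 / eulerProd (x ^ 4) ^ 8

/-- The expansion of `quotB` as a function of `x = e^{πiw}`; `quotC` is obtained from it by
`x ↦ -x`. -/
noncomputable def expB (x : ℂ) : ℂ :=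
  (2 * (1 - 24 * (x ^ 4 * sigmaSeries (x ^ 4))) - (1 + 24 * (x * sigmaSeries (-x))) / 2) *
    eulerProd (x ^ 2) ^ 4 / eulerProd x ^ 8

section

variable {w : ℂ}

lemma im_two_mul (hw : 0 < w.im) : 0 < (2 * w).im := by simpa using hw
lemma im_half (hw : 0 < w.im) : 0 < (w / 2).im := by simpa using hw
lemma im_half_shift (hw : 0 < w.im) : 0 < ((w + 1) / 2).im := by simpa using hw
lemma im_neg_one_div (hw : 0 < w.im) : 0 < (-1 / w).im := by
  simpa [neg_div] using (⟨w, hw⟩ : ℍ).im_inv_neg_coe_pos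

lemma expPar_two (w : ℂ) :
    Complex.exp (2 * π * Complex.I * w) = Complex.exp (π * Complex.I * w) ^ 2 := by
  rw [← Complex.exp_nat_mul]; congr 1; push_cast; ring

lemma expPar_four (w : ℂ) :
    Complex.exp (2 * π * Complex.I * (2 * w)) = Complex.exp (π * Complex.I * w) ^ 4 := by
  rw [← Complex.exp_nat_mul]; congr 1; push_cast; ring

lemma expPar_half (w : ℂ) :
    Complex.exp (2 * π * Complex.I * (w / 2)) = Complex.exp (π * Complex.I * w) := by
  congr 1; ring

lemma expPar_half_shift (w : ℂ) :
    Complex.exp (2 * π * Complex.I * ((w + 1) / 2)) = -Complex.exp (π * Complex.I * w) := by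
  rw [show 2 * π * Complex.I * ((w + 1) / 2) = π * Complex.I * w + π * Complex.I by ring,
    Complex.exp_add, Complex.exp_pi_mul_I, mul_neg_one]

lemma eulerProd_ne_zero (hw : 0 < w.im) {x : ℂ} (hx : x = Complex.exp (2 * π * Complex.I * w)) :
    eulerProd x ≠ 0 := by
  have h := eta_tprod_ne_zero (z := w) hw
  simp only [eta_q_eq_pow, ← hx] at h
  exact h

lemma quotA_eq (hw : 0 < w.im) : quotA w = expA (Complex.exp (π * Complex.I * w)) := by
  have h4 := eulerProd_ne_zero (im_two_mul hw) (expPar_four w).symm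
  rw [quotA, expA, eisTwo_eq (im_half_shift hw) (expPar_half_shift w).symm,
    eisTwo_eq (im_half hw) (expPar_half w).symm, etaFour_eq, etaFour_eq, expPar_two, expPar_four]
  have he : Complex.exp (π * Complex.I * (2 * w) / 3) ^ 2 =
      Complex.exp (π * Complex.I * w) * Complex.exp (π * Complex.I * w / 3) := by
    rw [← Complex.exp_nat_mul, ← Complex.exp_add]; congr 1; push_cast; ring
  rw [mul_pow, he]
  have h0 := Complex.exp_ne_zero (π * Complex.I * w)
  have h1 := Complex.exp_ne_zero (π * Complex.I * w / 3)
  generalize Complex.exp (π * Complex.I * w) = x at *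
  field_simp
  ring

lemma quotB_eq (hw : 0 < w.im) : quotB w = expB (Complex.exp (π * Complex.I * w)) := by
  have h4 := eulerProd_ne_zero (im_half hw) (expPar_half w).symm
  rw [quotB, expB, eisTwo_eq (im_half_shift hw) (expPar_half_shift w).symm,
    eisTwo_eq (im_two_mul hw) (expPar_four w).symm, etaFour_eq, etaFour_eq, expPar_two, expPar_half]
  have he : Complex.exp (π * Complex.I * (w / 2) / 3) ^ 2 =
      Complex.exp (π * Complex.I * w / 3) := by
    rw [← Complex.exp_nat_mul]; congr 1; push_cast; ring
  rw [mul_pow, he]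
  have h0 := Complex.exp_ne_zero (π * Complex.I * w)
  have h1 := Complex.exp_ne_zero (π * Complex.I * w / 3)
  generalize Complex.exp (π * Complex.I * w) = x at *
  field_simp
  ring

lemma quotC_eq (hw : 0 < w.im) : quotC w = expB (-Complex.exp (π * Complex.I * w)) := by
  have h4 := eulerProd_ne_zero (im_half_shift hw) (expPar_half_shift w).symm
  rw [quotC, expB, eisTwo_eq (im_half hw) (expPar_half w).symm,
    eisTwo_eq (im_two_mul hw) (expPar_four w).symm, etaFour_eq, etaFour_eq, expPar_two,
    expPar_half_shift]
  have he : Complex.exp (π * Complex.I * ((w + 1) / 2) / 3) ^ 2 =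
      Complex.exp (π * Complex.I / 3) * Complex.exp (π * Complex.I * w / 3) := by
    rw [← Complex.exp_nat_mul, ← Complex.exp_add]; congr 1; push_cast; ring
  rw [mul_pow, he]
  have h0 := Complex.exp_ne_zero (π * Complex.I * w)
  have h1 := Complex.exp_ne_zero (π * Complex.I * w / 3)
  have h2 := Complex.exp_ne_zero (π * Complex.I / 3)
  generalize Complex.exp (π * Complex.I * w) = x at *
  rw [neg_neg, neg_sq, show (-x) ^ 4 = x ^ 4 by ring]
  field_simp
  ring

lemma exp_add_one (w : ℂ) :
    Complex.exp (π * Complex.I * (w + 1)) = -Complex.exp (π * Complex.I * w) := by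
  rw [mul_add, mul_one, Complex.exp_add, Complex.exp_pi_mul_I, mul_neg_one]

lemma quotA_add_one (hw : 0 < w.im) : quotA (w + 1) = quotA w := by
  rw [quotA_eq (by simpa using hw), quotA_eq hw, exp_add_one, expA, expA, neg_neg, neg_sq,
    add_comm (sigmaSeries _), Even.neg_pow (by decide)]

lemma quotB_add_one (hw : 0 < w.im) : quotB (w + 1) = quotC w := by
  rw [quotB_eq (by simpa using hw), quotC_eq hw, exp_add_one]

lemma quotC_add_one (hw : 0 < w.im) : quotC (w + 1) = quotB w := by
  rw [quotB_eq hw, quotC_eq (by simpa using hw), exp_add_one, neg_neg]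

lemma eisTwo_add_one {z : ℂ} (hz : 0 < z.im) : eisTwo (z + 1) = eisTwo z := by
  have h : Complex.exp (2 * π * Complex.I * (z + 1)) = Complex.exp (2 * π * Complex.I * z) := by
    rw [mul_add, mul_one, Complex.exp_add, Complex.exp_two_pi_mul_I, mul_one]
  rw [eisTwo_eq (by simpa using hz) rfl, eisTwo_eq hz rfl, h]

lemma etaFour_add_one (z : ℂ) :
    etaFour (z + 1) = Complex.exp (π * Complex.I / 3) * etaFour z := by
  have h : Complex.exp (2 * π * Complex.I * (z + 1)) = Complex.exp (2 * π * Complex.I * z) := by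
    rw [mul_add, mul_one, Complex.exp_add, Complex.exp_two_pi_mul_I, mul_one]
  rw [etaFour_eq, etaFour_eq, h, ← mul_assoc, ← Complex.exp_add]
  congr 2
  ring

lemma exp_pi_third : Complex.exp (π * Complex.I / 3) ^ 3 = -1 := by
  rw [← Complex.exp_nat_mul, ← Complex.exp_pi_mul_I]; congr 1; push_cast; ring

lemma ne_zero_of_im (hw : 0 < w.im) : w ≠ 0 := by rintro rfl; simp at hw

/-! The next three lemmas say that `S` exchanges `E₂(w / 2) / 2` and `2 E₂(2w)` and fixes
`E₂((w + 1) / 2) / 2`, with the same anomaly `6w / (πi)` each time; differences of these functions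
are therefore modular of weight two. -/

lemma eisTwo_half_neg_one_div (hw : 0 < w.im) :
    eisTwo (-1 / w / 2) / 2 = w ^ 2 * (2 * eisTwo (2 * w)) + 6 / (π * Complex.I) * w := by
  have h0 := ne_zero_of_im hw
  rw [show -1 / w / 2 = -1 / (2 * w) by field_simp, eisTwo_neg_one_div (im_two_mul hw)]
  ring

lemma eisTwo_two_neg_one_div (hw : 0 < w.im) :
    2 * eisTwo (2 * (-1 / w)) = w ^ 2 * (eisTwo (w / 2) / 2) + 6 / (π * Complex.I) * w := by
  have h0 := ne_zero_of_im hw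
  rw [show 2 * (-1 / w) = -1 / (w / 2) by field_simp, eisTwo_neg_one_div (im_half hw)]
  ring

lemma im_shift_sub (hw : 0 < w.im) : 0 < ((w - 1) / 2).im := by simpa using hw

lemma im_mid (hw : 0 < w.im) : 0 < (-1 / ((w - 1) / 2) + -2).im := by
  simpa using im_neg_one_div (im_shift_sub hw)

/-- When `w` moves to `-1 / w`, the point `u = (w + 1) / 2` moves to `(S T⁻² S T⁻¹) u`, so the
values of modular forms there are determined by the laws for `S` and `T`. -/
lemma half_shift_neg_one_div (hw : 0 < w.im) :
    (-1 / w + 1) / 2 = -1 / (-1 / ((w - 1) / 2) + -2) := by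
  have h0 := ne_zero_of_im hw
  have h1 := ne_zero_of_im (im_shift_sub hw)
  have h2 := ne_zero_of_im (im_mid hw)
  have h3 : w - 1 ≠ 0 := by intro h; simp [h] at h1
  have h4 : -1 / ((w - 1) / 2) + -2 = -(2 * w) / (w - 1) := by field_simp; ring
  rw [h4]
  field_simp
  ring

lemma eisTwo_half_shift_neg_one_div (hw : 0 < w.im) :
    eisTwo ((-1 / w + 1) / 2) / 2 =
      w ^ 2 * (eisTwo ((w + 1) / 2) / 2) + 6 / (π * Complex.I) * w := by
  have hu := im_shift_sub hw
  have hv := im_neg_one_div hu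
  have h1 := ne_zero_of_im hu
  have h3 : w - 1 ≠ 0 := by intro h; simp [h] at h1
  have e1 : eisTwo (-1 / ((w - 1) / 2) + -2) = eisTwo (-1 / ((w - 1) / 2)) := by
    rw [← eisTwo_add_one (im_mid hw), ← eisTwo_add_one (by simpa using im_mid hw)]
    congr 1; ring
  have e2 : eisTwo ((w - 1) / 2) = eisTwo ((w + 1) / 2) := by
    rw [← eisTwo_add_one hu]; congr 1; ring
  rw [half_shift_neg_one_div hw, eisTwo_neg_one_div (im_mid hw), e1, eisTwo_neg_one_div hu, e2]
  have hpi : (π : ℂ) ≠ 0 := by exact_mod_cast Real.pi_ne_zero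
  field_simp
  ring

lemma etaFour_half_neg_one_div (hw : 0 < w.im) :
    etaFour (-1 / w / 2) = -(4 * w ^ 2 * etaFour (2 * w)) := by
  have h0 := ne_zero_of_im hw
  rw [show -1 / w / 2 = -1 / (2 * w) by field_simp, etaFour_neg_one_div (im_two_mul hw)]
  ring

lemma etaFour_two_neg_one_div (hw : 0 < w.im) :
    etaFour (2 * (-1 / w)) = -(w ^ 2 / 4 * etaFour (w / 2)) := by
  have h0 := ne_zero_of_im hw
  rw [show 2 * (-1 / w) = -1 / (w / 2) by field_simp, etaFour_neg_one_div (im_half hw)]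
  ring

lemma etaFour_half_shift_neg_one_div (hw : 0 < w.im) :
    etaFour ((-1 / w + 1) / 2) = -(w ^ 2 * etaFour ((w + 1) / 2)) := by
  have hu := im_shift_sub hw
  have h1 := ne_zero_of_im hu
  have h3 : w - 1 ≠ 0 := by intro h; simp [h] at h1
  have e1 : etaFour (-1 / ((w - 1) / 2)) =
      Complex.exp (π * Complex.I / 3) ^ 2 * etaFour (-1 / ((w - 1) / 2) + -2) := by
    rw [sq, mul_assoc, ← etaFour_add_one, ← etaFour_add_one]; congr 1; ring
  have e2 : etaFour ((w + 1) / 2) = Complex.exp (π * Complex.I / 3) * etaFour ((w - 1) / 2) := by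
    rw [← etaFour_add_one]; congr 1; ring
  rw [etaFour_neg_one_div hu] at e1
  rw [half_shift_neg_one_div hw, etaFour_neg_one_div (im_mid hw), e2]
  have h4 : -1 / ((w - 1) / 2) + -2 = -(2 * w) / (w - 1) := by field_simp; ring
  have hz := Complex.exp_ne_zero (π * Complex.I / 3)
  have hz3 := exp_pi_third
  generalize Complex.exp (π * Complex.I / 3) = ζ at *
  rw [h4] at e1 ⊢
  generalize etaFour (-(2 * w) / (w - 1)) = X at *
  have : X = ζ * (((w - 1) / 2) ^ 2 * etaFour ((w - 1) / 2)) := by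
    linear_combination ζ * e1 + X * hz3
  rw [this]
  field_simp

lemma quotA_neg_one_div (hw : 0 < w.im) : quotA (-1 / w) = quotB w := by
  have h0 := ne_zero_of_im hw
  have h1 := etaFour_ne_zero hw
  have h2 := etaFour_ne_zero (im_half hw)
  rw [quotA, sub_div, eisTwo_half_shift_neg_one_div hw, eisTwo_half_neg_one_div hw,
    etaFour_neg_one_div hw, etaFour_two_neg_one_div hw, quotB]
  field_simp
  ring

lemma quotB_neg_one_div (hw : 0 < w.im) : quotB (-1 / w) = quotA w := by
  have h0 := ne_zero_of_im hw
  have h1 := etaFour_ne_zero hw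
  have h2 := etaFour_ne_zero (im_two_mul hw)
  rw [quotB, eisTwo_half_shift_neg_one_div hw, eisTwo_two_neg_one_div hw,
    etaFour_neg_one_div hw, etaFour_half_neg_one_div hw, quotA]
  field_simp
  ring

lemma quotC_neg_one_div (hw : 0 < w.im) : quotC (-1 / w) = quotC w := by
  have h0 := ne_zero_of_im hw
  have h1 := etaFour_ne_zero hw
  have h2 := etaFour_ne_zero (im_half_shift hw)
  rw [quotC, eisTwo_half_neg_one_div hw, eisTwo_two_neg_one_div hw,
    etaFour_neg_one_div hw, etaFour_half_shift_neg_one_div hw, quotC]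
  field_simp
  ring

end

/-! ### The product of the three deviations is a cusp form -/

lemma tendsto_expA : Tendsto expA (𝓝 0) (𝓝 (3 / 2)) := by
  have hp : ∀ k : ℕ, k ≠ 0 → Tendsto (fun x : ℂ ↦ x ^ k) (𝓝 0) (𝓝 0) := fun k hk ↦ by
    simpa [hk] using (continuous_pow (M := ℂ) k).tendsto 0
  have hn : Tendsto (fun x : ℂ ↦ -x) (𝓝 0) (𝓝 0) := by
    simpa using (continuous_neg (G := ℂ)).tendsto 0
  have h := (((tendsto_sigmaSeries.add (tendsto_sigmaSeries.comp hn)).const_mul (3 / 4)).mul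
    ((tendsto_eulerProd.comp (hp 2 two_ne_zero)).pow 4)).div
    ((tendsto_eulerProd.comp (hp 4 four_ne_zero)).pow 8) (by norm_num)
  rw [show (3 / 2 : ℂ) = 3 / 4 * (1 + 1) * 1 ^ 4 / 1 ^ 8 by norm_num]
  exact h

lemma tendsto_expB : Tendsto expB (𝓝 0) (𝓝 (3 / 2)) := by
  have hp : ∀ k : ℕ, k ≠ 0 → Tendsto (fun x : ℂ ↦ x ^ k) (𝓝 0) (𝓝 0) := fun k hk ↦ by
    simpa [hk] using (continuous_pow (M := ℂ) k).tendsto 0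
  have hn : Tendsto (fun x : ℂ ↦ -x) (𝓝 0) (𝓝 0) := by
    simpa using (continuous_neg (G := ℂ)).tendsto 0
  have h1 := ((((hp 4 four_ne_zero).mul (tendsto_sigmaSeries.comp (hp 4 four_ne_zero))).const_mul
    24).const_sub 1).const_mul 2
  have h2 := ((((tendsto_id (x := 𝓝 (0 : ℂ))).mul
    (tendsto_sigmaSeries.comp hn)).const_mul 24).const_add 1).div_const 2
  have h := ((h1.sub h2).mul
    ((tendsto_eulerProd.comp (hp 2 two_ne_zero)).pow 4)).div
    (tendsto_eulerProd.pow 8) (by norm_num)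
  rw [show (3 / 2 : ℂ) = (2 * (1 - 24 * (0 * 1)) - (1 + 24 * (0 * 1)) / 2) * 1 ^ 4 / 1 ^ 8 by
    norm_num]
  exact h

/-- The product of the deviations of the three quotients from their common limit `3 / 2` at
`i∞`. -/
noncomputable def quotProd (τ : ℍ) : ℂ :=
  (quotA τ - 3 / 2) * ((quotB τ - 3 / 2) * (quotC τ - 3 / 2))

lemma quotProd_isZeroAtImInfty : IsZeroAtImInfty quotProd := by
  have hx : Tendsto (fun τ : ℍ ↦ Complex.exp (π * Complex.I * τ)) atImInfty (𝓝 0) := by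
    refine (qParam_tendsto_atImInfty two_pos).congr fun τ ↦ ?_
    rw [Function.Periodic.qParam]
    congr 1
    push_cast
    ring
  have hx' : Tendsto (fun τ : ℍ ↦ -Complex.exp (π * Complex.I * τ)) atImInfty (𝓝 0) := by
    simpa using hx.neg
  have h := ((tendsto_expA.comp hx).sub_const (3 / 2)).mul
    (((tendsto_expB.comp hx).sub_const (3 / 2)).mul ((tendsto_expB.comp hx').sub_const (3 / 2)))
  rw [sub_self, zero_mul] at h
  refine h.congr fun τ ↦ ?_
  simp only [quotProd, quotA_eq τ.im_pos, quotB_eq τ.im_pos, quotC_eq τ.im_pos, Function.comp_apply]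

lemma differentiableOn_eisTwo : DifferentiableOn ℂ eisTwo {z | 0 < z.im} :=
  UpperHalfPlane.mdifferentiable_iff.mp E2_mdifferentiable

lemma differentiableOn_etaFour : DifferentiableOn ℂ etaFour {z | 0 < z.im} := fun _ hz ↦
  ((differentiableAt_eta_of_mem_upperHalfPlaneSet hz).pow 4).differentiableWithinAt

lemma differentiableOn_comp_affine {f : ℂ → ℂ} (hf : DifferentiableOn ℂ f {z | 0 < z.im}) :
    DifferentiableOn ℂ (fun w ↦ f (2 * w)) {z | 0 < z.im} ∧
    DifferentiableOn ℂ (fun w ↦ f (w / 2)) {z | 0 < z.im} ∧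
    DifferentiableOn ℂ (fun w ↦ f ((w + 1) / 2)) {z | 0 < z.im} :=
  ⟨hf.comp (by fun_prop) fun _ h ↦ im_two_mul h, hf.comp (by fun_prop) fun _ h ↦ im_half h,
    hf.comp (by fun_prop) fun _ h ↦ im_half_shift h⟩

lemma differentiableOn_quotA : DifferentiableOn ℂ quotA {z | 0 < z.im} := by
  obtain ⟨h1, h2, h3⟩ := differentiableOn_comp_affine differentiableOn_eisTwo
  obtain ⟨g1, g2, g3⟩ := differentiableOn_comp_affine differentiableOn_etaFour
  exact (((h3.sub h2).div_const 2).mul differentiableOn_etaFour).div ((g1.pow 2).const_mul 16)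
    fun w hw ↦ mul_ne_zero (by norm_num) (pow_ne_zero 2 (etaFour_ne_zero (im_two_mul hw)))

lemma differentiableOn_quotB : DifferentiableOn ℂ quotB {z | 0 < z.im} := by
  obtain ⟨h1, h2, h3⟩ := differentiableOn_comp_affine differentiableOn_eisTwo
  obtain ⟨g1, g2, g3⟩ := differentiableOn_comp_affine differentiableOn_etaFour
  exact (((h1.const_mul 2).sub (h3.div_const 2)).mul differentiableOn_etaFour).div (g2.pow 2)
    fun w hw ↦ pow_ne_zero 2 (etaFour_ne_zero (im_half hw))

lemma differentiableOn_quotC : DifferentiableOn ℂ quotC {z | 0 < z.im} := by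
  obtain ⟨h1, h2, h3⟩ := differentiableOn_comp_affine differentiableOn_eisTwo
  obtain ⟨g1, g2, g3⟩ := differentiableOn_comp_affine differentiableOn_etaFour
  exact (((h1.const_mul 2).sub (h2.div_const 2)).mul (differentiableOn_etaFour.const_mul _)).div
    (g3.pow 2) fun w hw ↦ pow_ne_zero 2 (etaFour_ne_zero (im_half_shift hw))

lemma quotProd_slash_S : quotProd ∣[(0 : ℤ)] ModularGroup.S = quotProd := by
  ext τ
  rw [SlashInvariantForm.slash_S_apply]
  have h : (-(τ : ℂ))⁻¹ = -1 / τ := by rw [inv_neg, neg_div, one_div]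
  simp only [quotProd, h, quotA_neg_one_div τ.im_pos, quotB_neg_one_div τ.im_pos,
    quotC_neg_one_div τ.im_pos]
  simp
  ring

lemma quotProd_slash_T : quotProd ∣[(0 : ℤ)] ModularGroup.T = quotProd := by
  ext τ
  rw [SL_slash_def]
  beta_reduce
  rw [modular_T_smul]
  have h : (((1 : ℝ) +ᵥ τ : ℍ) : ℂ) = τ + 1 := by simp [add_comm]
  simp only [quotProd, h, quotA_add_one τ.im_pos, quotB_add_one τ.im_pos, quotC_add_one τ.im_pos,
    neg_zero, zpow_zero, mul_one]
  ring

/-- `quotProd` as a cusp form of weight zero and level one. -/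
noncomputable def quotCuspForm : CuspForm 𝒮ℒ 0 where
  toFun := quotProd
  slash_action_eq' A hA := by
    obtain ⟨A, rfl⟩ := hA
    exact SlashInvariantForm.slash_action_generators_SL2Z quotProd_slash_S quotProd_slash_T A
  holo' := by
    rw [UpperHalfPlane.mdifferentiable_iff]
    refine ((differentiableOn_quotA.sub_const (3 / 2)).mul
      ((differentiableOn_quotB.sub_const (3 / 2)).mul
        (differentiableOn_quotC.sub_const (3 / 2)))).congr fun z hz ↦ ?_
    simp [quotProd, ofComplex_apply_of_im_pos hz]
  zero_at_cusps' hc := by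
    rw [Subgroup.IsArithmetic.isCusp_iff_isCusp_SL2Z] at hc
    rw [OnePoint.isZeroAt_iff_forall_SL2Z hc]
    intro γ _
    rw [SlashInvariantForm.slash_action_generators_SL2Z quotProd_slash_S quotProd_slash_T]
    exact quotProd_isZeroAtImInfty

lemma quotProd_eq_zero (τ : ℍ) : quotProd τ = 0 := by
  have h := rank_zero_iff_forall_zero.mp
    (CuspForm.rank_eq_zero_of_weight_lt_twelve (k := 0) (by norm_num)) quotCuspForm
  exact DFunLike.congr_fun h τ

/-- One factor of the vanishing product vanishes identically by the identity theorem, and the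
modular group carries whichever factor it is to `quotA w - 3 / 2`. -/
lemma quotA_eq_const {w : ℂ} (hw : 0 < w.im) : quotA w = 3 / 2 := by
  have hopen := isOpen_upperHalfPlaneSet
  have hconn : IsPreconnected {z : ℂ | 0 < z.im} := (convex_halfSpace_im_gt 0).isPreconnected
  have hA := (differentiableOn_quotA.sub_const (3 / 2)).analyticOnNhd hopen
  have hB := (differentiableOn_quotB.sub_const (3 / 2)).analyticOnNhd hopen
  have hC := (differentiableOn_quotC.sub_const (3 / 2)).analyticOnNhd hopen
  have fromB : (∀ z : ℂ, 0 < z.im → quotB z = 3 / 2) → quotA w = 3 / 2 := fun h ↦ by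
    rw [← quotB_neg_one_div hw, h _ (im_neg_one_div hw)]
  rcases hA.eq_zero_or_eq_zero_of_mul_eq_zero (hB.mul hC)
    (fun z hz ↦ quotProd_eq_zero ⟨z, hz⟩) hconn with h | h
  · exact sub_eq_zero.mp (h w hw)
  · rcases hB.eq_zero_or_eq_zero_of_mul_eq_zero hC h hconn with h | h
    · exact fromB fun z hz ↦ sub_eq_zero.mp (h z hz)
    · refine fromB fun z hz ↦ ?_
      rw [← quotC_add_one hz]
      exact sub_eq_zero.mp (h _ (by simpa using hz))

/-! ### The identity -/

lemma dedekindEta_eq (z : ℂ) : dedekindEta z = ModularForm.eta z := by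
  rw [dedekindEta, ModularForm.eta, Function.Periodic.qParam]
  simp only [eta_q_eq_cexp]
  congr 2
  push_cast
  ring

/-- The odd part of the generating series of `σ₁`. -/
lemma hasSum_odd {x : ℂ} (hx : ‖x‖ < 1) :
    HasSum (fun n : ℕ ↦ if Odd n then ((∑ d ∈ n.divisors, d : ℕ) : ℂ) * x ^ n else 0)
      (x * (sigmaSeries x + sigmaSeries (-x)) / 2) := by
  have h := (((hasSum_sigmaSeries hx).add
    (hasSum_sigmaSeries (x := -x) (by simpa using hx))).mul_left x).div_const 2
  have e (n : ℕ) : x * ((σ 1 (n + 1) : ℂ) * x ^ n + (σ 1 (n + 1) : ℂ) * (-x) ^ n) / 2 =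
      if Odd (n + 1) then ((∑ d ∈ (n + 1).divisors, d : ℕ) : ℂ) * x ^ (n + 1) else 0 := by
    rw [← ArithmeticFunction.sigma_one_apply]
    rcases Nat.even_or_odd n with hn | hn
    · rw [if_pos hn.add_one, hn.neg_pow]; ring
    · rw [if_neg (Nat.not_odd_iff_even.mpr hn.add_one), hn.neg_pow]; ring
  simp only [e] at h
  rw [← hasSum_nat_add_iff' 1, Finset.sum_range_one, if_neg (by decide), sub_zero]
  exact h

end Helpers

theorem stmt_17 (z : ℂ) (hz : 0 < z.im) :
    dedekindEta (4 * z) ^ 8 / dedekindEta (2 * z) ^ 4 =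
      ∑' n : ℕ, if Odd n then
        ((∑ d ∈ n.divisors, d : ℕ) : ℂ) * Complex.exp (2 * Real.pi * Complex.I * (n : ℂ) * z)
      else 0 := by
  have hx : ‖Complex.exp (2 * π * Complex.I * z)‖ < 1 :=
    UpperHalfPlane.norm_exp_two_pi_I_lt_one ⟨z, hz⟩
  have hpow : ∀ n : ℕ, Complex.exp (2 * π * Complex.I * (n : ℂ) * z) =
      Complex.exp (2 * π * Complex.I * z) ^ n := fun n ↦ by
    rw [← Complex.exp_nat_mul]; congr 1; ring
  simp only [hpow]
  rw [(hasSum_odd hx).tsum_eq]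
  have hw := im_two_mul hz
  have h := quotA_eq_const hw
  have n1 := etaFour_ne_zero hw
  have n2 := etaFour_ne_zero (im_two_mul hw)
  rw [quotA, eisTwo_eq (im_half_shift hw) (expPar_half_shift _).symm,
    eisTwo_eq (im_half hw) (expPar_half _).symm,
    show (π : ℂ) * Complex.I * (2 * z) = 2 * π * Complex.I * z by ring] at h
  rw [dedekindEta_eq, dedekindEta_eq, show 4 * z = 2 * (2 * z) by ring,
    show ModularForm.eta (2 * (2 * z)) ^ 8 = etaFour (2 * (2 * z)) ^ 2 by rw [etaFour]; ring,
    ← etaFour, div_eq_iff n1]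
  rw [div_eq_iff (by simpa using n2)] at h
  linear_combination (-1 / 24 : ℂ) * h
end
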